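/- (Theorem 2) Let N ≥ 4 and let q^e = (x^e, y^e) be a placement with pairwise distinct node positions and x^e, y^e, 1 linearly independent. Suppose the stress matrix Ω is positive semidefinite with kernel exactly span{x^e, y^e, 1}; for each edge with ω_ij ≠ 0 set α_ij = π/arctan(ω_ij) and l_ij = r^e_ij (1 − arctan(ω_ij)/π); suppose the rank-one matrices (q^e_i − q^e_j)(q^e_i − q^e_j)ᵀ over the edges with ω_ij ≠ 0 span the space of symmetric 2×2 matrices; and let ν > 0. Let E = {((R q^e_1 + t, …, R q^e_N + t), 0) : R ∈ SO(2), t ∈ ℝ²} ⊂ ℝ^{2N} × ℝ^{2N}. Then E is a locally exponentially stable set of equilibria of the damped gradient system q̇_i = p_i, ṗ_i = −ν p_i − Σ_{j≠i} α_ij ω_ij (1 − l_ij/r_ij)(q_i − q_j): there exist δ, C, λ > 0 such that every solution (q(t), p(t)) of this system with dist((q(0), p(0)), E) < δ is defined for all t ≥ 0 and satisfies dist((q(t), p(t)), E) ≤ C e^{−λ t} dist((q(0), p(0)), E) for all t ≥ 0. -/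

import Mathlib

open Finset Matrix Real

/-- The stress matrix of symmetric stresses `ω`: off-diagonal entries `-ω i j`,
diagonal entries `∑_{k ≠ i} ω i k`. -/
noncomputable def stressMatrix {N : ℕ} (ω : Fin N → Fin N → ℝ) : Matrix (Fin N) (Fin N) ℝ :=
  Matrix.of fun i j => if i = j then ∑ k ∈ Finset.univ.erase i, ω i k else -ω i j

/-!
The system is the damped gradient flow of a spring energy `U` that is invariant under rigid motions.
The springs are tuned so that at `q^e` the second variation of `U` is the stress energy plus a
positive multiple of the squared first-order change of length of every stressed edge. A null
vector therefore lies in the kernel of the stress matrix, so it is an affine deformation of `q^e`,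
and it preserves the lengths of the stressed edges to first order, so its linear part is skew:
the second variation is positive definite transversally to the orbit of `q^e`.

A configuration near the orbit is moved by a symmetry so that `q^e` becomes its nearest point on the
orbit; the displacement is then orthogonal to the orbit, and `U - U(q^e)` is comparable to the
squared distance to the orbit, with `F = ∇U` controlled from both sides by the distance.
Consequently `½‖p‖² + U - U(q^e) + ε⟪F, p⟫` with small `ε > 0` is a strict Lyapunov function
comparable to the squared distance to the set of equilibria.
-/

section Lyapunov

variable {Z W : Type*} [NormedAddCommGroup Z] [NormedSpace ℝ Z]
  [NormedAddCommGroup W] [NormedSpace ℝ W]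

/-- The set `E` is locally exponentially stable for `ż = X z`: every forward solution starting
`δ`-close to `E` approaches `E` at a uniform exponential rate. -/
def LocallyExponentiallyStable (X : Z → Z) (E : Set Z) : Prop :=
  ∃ δ C lam : ℝ, 0 < δ ∧ 0 < C ∧ 0 < lam ∧
    ∀ z : ℝ → Z, (∀ t, 0 ≤ t → HasDerivAt z (X (z t)) t) → Metric.infDist (z 0) E < δ →
      ∀ t, 0 ≤ t → Metric.infDist (z t) E ≤ C * exp (-lam * t) * Metric.infDist (z 0) E

theorem forall_lt_of_bootstrap {f : ℝ → ℝ} {ρ' ρ : ℝ} (hf : ContinuousOn f (Set.Ici 0))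
    (h₀ : f 0 < ρ) (hρ : ρ' < ρ)
    (hstep : ∀ T, 0 ≤ T → (∀ t ∈ Set.Icc 0 T, f t < ρ) → f T ≤ ρ') :
    ∀ t, 0 ≤ t → f t < ρ := by
  by_contra! hexit
  obtain ⟨t₁, ht₁, hft₁⟩ := hexit
  have hcont : ContinuousOn f (Set.Icc 0 t₁) := hf.mono Set.Icc_subset_Ici_self
  have hcompact : IsCompact (Set.Icc 0 t₁ ∩ f ⁻¹' Set.Ici ρ) :=
    isCompact_Icc.of_isClosed_subset (hcont.preimage_isClosed_of_isClosed isClosed_Icc isClosed_Ici)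
      Set.inter_subset_left
  obtain ⟨T, ⟨hT, hfT⟩, hleast⟩ := hcompact.exists_isLeast ⟨t₁, ⟨ht₁, le_rfl⟩, hft₁⟩
  have hbefore : ∀ t ∈ Set.Ico 0 T, f t < ρ := fun t ht => by
    by_contra! hft
    exact absurd (hleast ⟨⟨ht.1, ht.2.le.trans hT.2⟩, hft⟩) (not_le.mpr ht.2)
  have hT₀ : 0 < T := hT.1.lt_of_ne (by rintro rfl; exact absurd hfT (not_le.mpr h₀))
  have hle : ∀ t ∈ Set.Ico 0 T, f t ≤ ρ' := fun t ht =>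
    hstep t ht.1 fun s hs => hbefore s ⟨hs.1, hs.2.trans_lt ht.2⟩
  have hleft : Filter.Tendsto f (nhdsWithin T (Set.Ico 0 T)) (nhds (f T)) :=
    (hf T hT.1).mono Set.Ico_subset_Ici_self
  have : (nhdsWithin T (Set.Ico 0 T)).NeBot := by
    rw [← mem_closure_iff_nhdsWithin_neBot, closure_Ico hT₀.ne]
    exact Set.right_mem_Icc.mpr hT.1
  have hfT' : f T ≤ ρ' :=
    le_of_tendsto hleft (Filter.eventually_of_mem self_mem_nhdsWithin hle)
  exact absurd hfT (not_le.mpr (hfT'.trans_lt hρ))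

theorem le_exp_mul_of_deriv_le {φ φ' : ℝ → ℝ} {lam T : ℝ} (hT : 0 ≤ T)
    (hφ : ∀ t ∈ Set.Icc 0 T, HasDerivAt φ (φ' t) t)
    (hφ' : ∀ t ∈ Set.Icc 0 T, φ' t ≤ -lam * φ t) :
    φ T ≤ exp (-lam * T) * φ 0 := by
  have hderiv : ∀ t ∈ Set.Icc 0 T, HasDerivAt (fun t => exp (lam * t) * φ t)
      (exp (lam * t) * (lam * 1) * φ t + exp (lam * t) * φ' t) t := fun t ht =>
    ((hasDerivAt_id t).const_mul lam).exp.mul (hφ t ht)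
  have hanti : AntitoneOn (fun t => exp (lam * t) * φ t) (Set.Icc 0 T) := by
    refine antitoneOn_of_hasDerivWithinAt_nonpos (convex_Icc 0 T)
      (fun t ht => (hderiv t ht).continuousAt.continuousWithinAt)
      (fun t ht => (hderiv t (interior_subset ht)).hasDerivWithinAt) fun t ht => ?_
    nlinarith [exp_pos (lam * t), hφ' t (interior_subset ht)]
  have hle : exp (lam * T) * φ T ≤ φ 0 := by
    simpa using hanti (Set.left_mem_Icc.mpr hT) (Set.right_mem_Icc.mpr hT) hT
  calc φ T = exp (-lam * T) * (exp (lam * T) * φ T) := by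
        rw [← mul_assoc, ← exp_add]; simp
    _ ≤ exp (-lam * T) * φ 0 := by gcongr

/-- A Lyapunov function for `ż = X z` near `E`: it is comparable to the squared distance to `E` and
dissipates at a rate comparable to that squared distance. -/
structure IsQuadraticLyapunov (X : Z → Z) (E : Set Z) (V : Z → ℝ) (ρ a b c : ℝ) : Prop where
  le_apply : ∀ z, Metric.infDist z E < ρ → a * Metric.infDist z E ^ 2 ≤ V z
  apply_le : ∀ z, Metric.infDist z E < ρ → V z ≤ b * Metric.infDist z E ^ 2
  dissipation : ∀ z, Metric.infDist z E < ρ →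
    ∃ V' : Z →L[ℝ] ℝ, HasFDerivAt V V' z ∧ V' (X z) ≤ -c * Metric.infDist z E ^ 2

namespace IsQuadraticLyapunov

variable {X : Z → Z} {E : Set Z} {V : Z → ℝ} {ρ a b c : ℝ}

theorem infDist_le (hV : IsQuadraticLyapunov X E V ρ a b c) (ha : 0 < a) (hb : 0 < b)
    (hc : 0 < c) {z : ℝ → Z} {T : ℝ} (hT : 0 ≤ T)
    (hz : ∀ t ∈ Set.Icc 0 T, HasDerivAt z (X (z t)) t)
    (hnear : ∀ t ∈ Set.Icc 0 T, Metric.infDist (z t) E < ρ) :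
    Metric.infDist (z T) E ≤ √(b / a) * exp (-(c / (2 * b)) * T) * Metric.infDist (z 0) E := by
  choose! V' hV' hdecay using hV.dissipation
  have hVT : V (z T) ≤ exp (-(c / b) * T) * V (z 0) := by
    refine le_exp_mul_of_deriv_le hT
      (fun t ht => (hV' _ (hnear t ht)).comp_hasDerivAt t (hz t ht)) fun t ht => ?_
    calc V' (z t) (X (z t)) ≤ -c * Metric.infDist (z t) E ^ 2 := hdecay _ (hnear t ht)
      _ = -(c / b) * (b * Metric.infDist (z t) E ^ 2) := by field_simp
      _ ≤ -(c / b) * V (z t) :=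
          mul_le_mul_of_nonpos_left (hV.apply_le _ (hnear t ht))
            (neg_nonpos.mpr (by positivity))
  have hsq : a * Metric.infDist (z T) E ^ 2 ≤
      exp (-(c / b) * T) * (b * Metric.infDist (z 0) E ^ 2) :=
    calc _ ≤ V (z T) := hV.le_apply _ (hnear T (Set.right_mem_Icc.mpr hT))
      _ ≤ exp (-(c / b) * T) * V (z 0) := hVT
      _ ≤ _ := by gcongr; exact hV.apply_le _ (hnear 0 (Set.left_mem_Icc.mpr hT))
  have hd₀ : 0 ≤ Metric.infDist (z 0) E := Metric.infDist_nonneg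
  refine le_of_sq_le_sq ?_ (by positivity)
  have hexp : exp (-(c / (2 * b)) * T) ^ 2 = exp (-(c / b) * T) := by
    rw [← exp_nat_mul]; congr 1; push_cast; field_simp
  rw [mul_pow, mul_pow, sq_sqrt (by positivity), hexp]
  refine le_of_mul_le_mul_left (hsq.trans_eq ?_) ha
  field_simp

theorem locallyExponentiallyStable (hV : IsQuadraticLyapunov X E V ρ a b c) (hρ : 0 < ρ)
    (ha : 0 < a) (hb : 0 < b) (hc : 0 < c) : LocallyExponentiallyStable X E := by
  set C := √(b / a)
  have hC : 0 < C := by positivity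
  refine ⟨min ρ (ρ / (2 * C)), C, c / (2 * b), by positivity, hC, by positivity,
    fun z hz hz₀ t ht => ?_⟩
  have hz₀ρ : C * Metric.infDist (z 0) E ≤ ρ / 2 := by
    have := (hz₀.trans_le (min_le_right _ _)).le
    rw [le_div_iff₀ (by positivity)] at this
    linarith
  have hcont : ContinuousOn (fun t => Metric.infDist (z t) E) (Set.Ici 0) := fun s hs =>
    ((Metric.continuous_infDist_pt E).continuousAt.comp (hz s hs).continuousAt).continuousWithinAt
  have hnear : ∀ s, 0 ≤ s → Metric.infDist (z s) E < ρ := by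
    refine forall_lt_of_bootstrap hcont (hz₀.trans_le (min_le_left _ _)) (half_lt_self hρ)
      fun T hT hclose => ?_
    have hd₀ : 0 ≤ Metric.infDist (z 0) E := Metric.infDist_nonneg
    calc _ ≤ C * exp (-(c / (2 * b)) * T) * Metric.infDist (z 0) E :=
          hV.infDist_le ha hb hc hT (fun s hs => hz s hs.1) hclose
      _ ≤ C * 1 * Metric.infDist (z 0) E := by
          gcongr
          exact exp_le_one_iff.mpr (mul_nonpos_of_nonpos_of_nonneg
            (neg_nonpos.mpr (by positivity)) hT)
      _ ≤ ρ / 2 := by rwa [mul_one]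
  exact hV.infDist_le ha hb hc ht (fun s hs => hz s hs.1) fun s hs => hnear s hs.1

end IsQuadraticLyapunov

theorem infDist_image_le (T : W →L[ℝ] Z) (E : Set W) (w : W) :
    Metric.infDist (T w) (T '' E) ≤ ‖T‖ * Metric.infDist w E := by
  rcases E.eq_empty_or_nonempty with rfl | hE
  · simp
  have : Nonempty E := hE.to_subtype
  rw [Metric.infDist_eq_iInf (s := E), Real.mul_iInf_of_nonneg (norm_nonneg T)]
  refine le_ciInf fun x => (Metric.infDist_le_dist_of_mem (Set.mem_image_of_mem T x.2)).trans ?_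
  rw [dist_eq_norm, dist_eq_norm, ← map_sub]
  exact T.le_opNorm _

theorem LocallyExponentiallyStable.preimage {X : Z → Z} {E : Set Z}
    (hX : LocallyExponentiallyStable X E) (T : W ≃L[ℝ] Z) :
    LocallyExponentiallyStable (fun w => T.symm (X (T w))) (T ⁻¹' E) := by
  obtain ⟨δ, C, lam, hδ, hC, hlam, hdecay⟩ := hX
  set K := ‖(T : W →L[ℝ] Z)‖
  set K' := ‖(T.symm : Z →L[ℝ] W)‖
  have hle : ∀ w, Metric.infDist (T w) E ≤ K * Metric.infDist w (T ⁻¹' E) := fun w => by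
    simpa [Set.image_preimage_eq E T.surjective] using
      infDist_image_le (T : W →L[ℝ] Z) (T ⁻¹' E) w
  have hle' : ∀ w, Metric.infDist w (T ⁻¹' E) ≤ K' * Metric.infDist (T w) E := fun w => by
    simpa [T.image_symm_eq_preimage] using infDist_image_le (T.symm : Z →L[ℝ] W) E (T w)
  refine ⟨δ / (K + 1), K' * C * K + 1, lam, by positivity, by positivity, hlam,
    fun w hw hw₀ t ht => ?_⟩
  have hd₀ : 0 ≤ Metric.infDist (w 0) (T ⁻¹' E) := Metric.infDist_nonneg
  have hTw : ∀ t, 0 ≤ t → HasDerivAt (fun t => T (w t)) (X (T (w t))) t := fun t ht => by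
    simpa [Function.comp_def] using (T : W →L[ℝ] Z).hasFDerivAt.comp_hasDerivAt t (hw t ht)
  have hTw₀ : Metric.infDist (T (w 0)) E < δ := by
    rw [lt_div_iff₀ (by positivity)] at hw₀
    linarith [hle (w 0)]
  calc Metric.infDist (w t) (T ⁻¹' E)
      ≤ K' * Metric.infDist (T (w t)) E := hle' _
    _ ≤ K' * (C * exp (-lam * t) * (K * Metric.infDist (w 0) (T ⁻¹' E))) := by
        gcongr
        exact (hdecay _ hTw hTw₀ t ht).trans (by gcongr; exact hle _)
    _ = K' * C * K * exp (-lam * t) * Metric.infDist (w 0) (T ⁻¹' E) := by ring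
    _ ≤ (K' * C * K + 1) * exp (-lam * t) * Metric.infDist (w 0) (T ⁻¹' E) := by
        gcongr; exact le_add_of_nonneg_right zero_le_one

end Lyapunov

section DampedGradient

theorem infDist_prod_singleton_zero {H : Type*} [SeminormedAddCommGroup H] {M : Set H}
    (hM : M.Nonempty) (z : H × H) :
    Metric.infDist z (M ×ˢ {0}) = max (Metric.infDist z.1 M) ‖z.2‖ := by
  rw [Metric.infDist, Metric.infEDist_prod, ENNReal.toReal_max (Metric.infEDist_ne_top hM)
    (Metric.infEDist_ne_top (Set.singleton_nonempty 0))]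
  simp [Metric.infDist, edist_zero_right]

theorem max_sq_le_add_sq (x y : ℝ) : max x y ^ 2 ≤ x ^ 2 + y ^ 2 := by
  rcases max_choice x y with h | h <;> rw [h] <;> nlinarith [sq_nonneg x, sq_nonneg y]

theorem add_sq_le_two_mul_max_sq {x y : ℝ} (hx : 0 ≤ x) (hy : 0 ≤ y) :
    x ^ 2 + y ^ 2 ≤ 2 * max x y ^ 2 := by
  have hx' : x ^ 2 ≤ max x y ^ 2 := by gcongr; exact le_max_left x y
  have hy' : y ^ 2 ≤ max x y ^ 2 := by gcongr; exact le_max_right x y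
  linarith

theorem exists_perturbation_parameter {ν a : ℝ} (b : ℝ) (hν : 0 < ν) (ha : 0 < a) :
    ∃ ε, 0 < ε ∧ ε ≤ 1 ∧ ε * (ν ^ 2 / 2 + b) ≤ ν / 2 ∧ (ε * b) ^ 2 ≤ a / 2 := by
  have hone : ∀ᶠ ε : ℝ in nhds 0, ε < 1 :=
    Filter.Tendsto.eventually_lt_const one_pos Filter.tendsto_id
  have hdamp : ∀ᶠ ε : ℝ in nhds 0, ε * (ν ^ 2 / 2 + b) < ν / 2 :=
    Filter.Tendsto.eventually_lt_const (half_pos hν)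
      (Continuous.tendsto' (by fun_prop) _ _ (by simp))
  have hcross : ∀ᶠ ε : ℝ in nhds 0, (ε * b) ^ 2 < a / 2 :=
    Filter.Tendsto.eventually_lt_const (half_pos ha)
      (Continuous.tendsto' (by fun_prop) _ _ (by simp))
  obtain ⟨ε, ⟨h₁, h₂, h₃⟩, hε⟩ :=
    (((hone.and (hdamp.and hcross)).filter_mono nhdsWithin_le_nhds).and
      (self_mem_nhdsWithin (s := Set.Ioi (0 : ℝ)))).exists
  exact ⟨ε, hε, h₁.le, h₂.le, h₃.le⟩

variable {H : Type*} [NormedAddCommGroup H] [InnerProductSpace ℝ H]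

open scoped RealInnerProductSpace

/-- The vector field `q̇ = p, ṗ = -ν p - F q` on phase space: a particle with friction `ν` in the
force field `-F`. -/
def dampedField (ν : ℝ) (F : H → H) (z : H × H) : H × H :=
  (z.2, (-ν) • z.2 - F z.1)

/-- Quadratic growth of the potential `U` above the level `u₀` at the point `q`, measured by a
quantity `d` (in practice the distance of `q` to a set where `U = u₀`) and with constants `a`, `b`;
the gradient `F` has size comparable to `d`, and its derivative at `q` is bounded by `b`. -/
structure QuadraticGrowthAt [CompleteSpace H] (U : H → ℝ) (F : H → H) (u₀ a b d : ℝ) (q : H) :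
    Prop where
  hasGradientAt : HasGradientAt U (F q) q
  exists_hasFDerivAt : ∃ F' : H →L[ℝ] H, HasFDerivAt F F' q ∧ ‖F'‖ ≤ b
  le_sub : a * d ^ 2 ≤ U q - u₀
  sub_le : U q - u₀ ≤ b * d ^ 2
  le_norm : a * d ≤ ‖F q‖
  norm_le : ‖F q‖ ≤ b * d

/-- The total energy relative to the level `u₀`, perturbed by the cross term `ε ⟪F q, p⟫` that makes
it dissipate in the position variable too. -/
noncomputable def perturbedEnergy (U : H → ℝ) (F : H → H) (u₀ ε : ℝ) (z : H × H) : ℝ :=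
  ‖z.2‖ ^ 2 / 2 + (U z.1 - u₀) + ε * ⟪F z.1, z.2⟫

theorem hasFDerivAt_perturbedEnergy [CompleteSpace H] {U : H → ℝ} {F : H → H} {F' : H →L[ℝ] H}
    {z : H × H} (u₀ ε : ℝ) (hU : HasGradientAt U (F z.1) z.1) (hF : HasFDerivAt F F' z.1) :
    ∃ V' : H × H →L[ℝ] ℝ, HasFDerivAt (perturbedEnergy U F u₀ ε) V' z ∧
      ∀ w, V' w = ⟪z.2, w.2⟫ + ⟪F z.1, w.1⟫ + ε * (⟪F z.1, w.2⟫ + ⟪F' w.1, z.2⟫) := by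
  have hfst := hasFDerivAt_fst (𝕜 := ℝ) (p := z)
  have hsnd := hasFDerivAt_snd (𝕜 := ℝ) (p := z)
  refine ⟨_, ((hsnd.norm_sq.mul_const (2 : ℝ)⁻¹).add
    ((hU.hasFDerivAt.comp z hfst).sub_const u₀)).add
    (((hF.comp z hfst).inner ℝ hsnd).const_mul ε), fun w => ?_⟩
  simp

variable [CompleteSpace H] {U : H → ℝ} {F : H → H} {u₀ a b d ν ε : ℝ} {z : H × H}

namespace QuadraticGrowthAt

theorem le_perturbedEnergy (h : QuadraticGrowthAt U F u₀ a b d z.1)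
    (hε : 0 < ε) (hcross : (ε * b) ^ 2 ≤ a / 2) :
    min (1 / 4) (a / 2) * (d ^ 2 + ‖z.2‖ ^ 2) ≤ perturbedEnergy U F u₀ ε z := by
  have hinner : -(b * d * ‖z.2‖) ≤ ⟪F z.1, z.2⟫ :=
    (abs_le.mp ((abs_real_inner_le_norm _ _).trans (by gcongr; exact h.norm_le))).1
  have hyoung : ε * b * d * ‖z.2‖ ≤ ‖z.2‖ ^ 2 / 4 + a / 2 * d ^ 2 := by
    nlinarith [sq_nonneg (‖z.2‖ / 2 - ε * b * d), mul_le_mul_of_nonneg_right hcross (sq_nonneg d)]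
  have hU : a * d ^ 2 ≤ U z.1 - u₀ := h.le_sub
  calc _ = min (1 / 4) (a / 2) * d ^ 2 + min (1 / 4) (a / 2) * ‖z.2‖ ^ 2 := by ring
    _ ≤ a / 2 * d ^ 2 + 1 / 4 * ‖z.2‖ ^ 2 := by
        gcongr
        exacts [min_le_right _ _, min_le_left _ _]
    _ ≤ _ := by
        rw [perturbedEnergy]
        nlinarith [mul_le_mul_of_nonneg_left hinner hε.le]

theorem perturbedEnergy_le (h : QuadraticGrowthAt U F u₀ a b d z.1)
    (hb : 0 < b) (hd : 0 ≤ d) (hε : 0 < ε) (hε₁ : ε ≤ 1) :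
    perturbedEnergy U F u₀ ε z ≤ (1 + 2 * b) * (d ^ 2 + ‖z.2‖ ^ 2) := by
  have hinner : ⟪F z.1, z.2⟫ ≤ b * d * ‖z.2‖ :=
    (real_inner_le_norm _ _).trans (by gcongr; exact h.norm_le)
  have hcross : ε * ⟪F z.1, z.2⟫ ≤ b * d * ‖z.2‖ :=
    (mul_le_mul_of_nonneg_left hinner hε.le).trans
      (mul_le_of_le_one_left (by positivity) hε₁)
  have hU : U z.1 - u₀ ≤ b * d ^ 2 := h.sub_le
  rw [perturbedEnergy]
  nlinarith [mul_nonneg hb.le (sq_nonneg (d - ‖z.2‖)), sq_nonneg d, sq_nonneg ‖z.2‖,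
    mul_nonneg hb.le (sq_nonneg d), mul_nonneg hb.le (sq_nonneg ‖z.2‖)]

theorem perturbedEnergy_dissipation (h : QuadraticGrowthAt U F u₀ a b d z.1)
    (ha : 0 < a) (hd : 0 ≤ d) (hε : 0 < ε)
    (hdamp : ε * (ν ^ 2 / 2 + b) ≤ ν / 2) :
    ∃ V' : H × H →L[ℝ] ℝ, HasFDerivAt (perturbedEnergy U F u₀ ε) V' z ∧
      V' (dampedField ν F z) ≤
        -min (ν / 2) (ε * a ^ 2 / 2) * (d ^ 2 + ‖z.2‖ ^ 2) := by
  obtain ⟨F', hF', hF'b⟩ := h.exists_hasFDerivAt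
  obtain ⟨V', hV', hV'_apply⟩ := hasFDerivAt_perturbedEnergy u₀ ε h.hasGradientAt hF'
  refine ⟨V', hV', ?_⟩
  set c := min (ν / 2) (ε * a ^ 2 / 2)
  have hrate : V' (dampedField ν F z) =
      -ν * ‖z.2‖ ^ 2 - ε * ‖F z.1‖ ^ 2 + ε * (⟪F' z.2, z.2⟫ - ν * ⟪F z.1, z.2⟫) := by
    rw [hV'_apply]
    simp only [dampedField, inner_sub_right, inner_smul_right, real_inner_self_eq_norm_sq,
      real_inner_comm z.2]
    ring
  have hF'inner : ⟪F' z.2, z.2⟫ ≤ b * ‖z.2‖ ^ 2 :=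
    calc ⟪F' z.2, z.2⟫ ≤ ‖F' z.2‖ * ‖z.2‖ := real_inner_le_norm _ _
      _ ≤ b * ‖z.2‖ * ‖z.2‖ := by gcongr; exact F'.le_of_opNorm_le hF'b _
      _ = b * ‖z.2‖ ^ 2 := by ring
  have hyoung : -(ν * ⟪F z.1, z.2⟫) ≤ ν ^ 2 / 2 * ‖z.2‖ ^ 2 + ‖F z.1‖ ^ 2 / 2 := by
    have hsq := sq_nonneg ‖F z.1 + ν • z.2‖
    rw [norm_add_sq_real, inner_smul_right, norm_smul, mul_pow, norm_eq_abs, sq_abs] at hsq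
    linarith
  have hforce : (a * d) ^ 2 ≤ ‖F z.1‖ ^ 2 := by gcongr; exact h.le_norm
  calc _ ≤ -(ν / 2) * ‖z.2‖ ^ 2 - ε / 2 * ‖F z.1‖ ^ 2 := by
        rw [hrate]
        nlinarith [mul_le_mul_of_nonneg_left (add_le_add hF'inner hyoung) hε.le,
          mul_le_mul_of_nonneg_right hdamp (sq_nonneg ‖z.2‖)]
    _ ≤ -(ν / 2 * ‖z.2‖ ^ 2 + ε * a ^ 2 / 2 * d ^ 2) := by
        nlinarith [mul_le_mul_of_nonneg_left hforce hε.le]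
    _ ≤ -(c * ‖z.2‖ ^ 2 + c * d ^ 2) := by
        gcongr
        exacts [min_le_left _ _, min_le_right _ _]
    _ = _ := by ring

end QuadraticGrowthAt

theorem isQuadraticLyapunov_perturbedEnergy {M : Set H} {ρ : ℝ} (hM : M.Nonempty)
    (ha : 0 < a) (hb : 0 < b) (hν : 0 < ν) (hε : 0 < ε) (hε₁ : ε ≤ 1)
    (hdamp : ε * (ν ^ 2 / 2 + b) ≤ ν / 2) (hcross : (ε * b) ^ 2 ≤ a / 2)
    (hgrowth : ∀ q, Metric.infDist q M < ρ →
      QuadraticGrowthAt U F u₀ a b (Metric.infDist q M) q) :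
    IsQuadraticLyapunov (dampedField ν F) (M ×ˢ {0}) (perturbedEnergy U F u₀ ε) ρ
      (min (1 / 4) (a / 2)) (2 * (1 + 2 * b)) (min (ν / 2) (ε * a ^ 2 / 2)) := by
  have hm : 0 < min (1 / 4) (a / 2) := by positivity
  have hc : 0 < min (ν / 2) (ε * a ^ 2 / 2) := by positivity
  have hdist := infDist_prod_singleton_zero hM
  have hnear : ∀ z : H × H, Metric.infDist z (M ×ˢ {0}) < ρ →
      QuadraticGrowthAt U F u₀ a b (Metric.infDist z.1 M) z.1 := fun z hz =>
    hgrowth _ ((le_max_left _ _).trans_lt (hdist z ▸ hz))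
  have hle : ∀ z : H × H, Metric.infDist z (M ×ˢ {0}) ^ 2 ≤
      Metric.infDist z.1 M ^ 2 + ‖z.2‖ ^ 2 := fun z => by
    rw [hdist]; exact max_sq_le_add_sq _ _
  have hge : ∀ z : H × H, Metric.infDist z.1 M ^ 2 + ‖z.2‖ ^ 2 ≤
      2 * Metric.infDist z (M ×ˢ {0}) ^ 2 := fun z => by
    rw [hdist]; exact add_sq_le_two_mul_max_sq Metric.infDist_nonneg (norm_nonneg _)
  refine ⟨fun z hz => ?_, fun z hz => ?_, fun z hz => ?_⟩
  · exact (mul_le_mul_of_nonneg_left (hle z) hm.le).trans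
      ((hnear z hz).le_perturbedEnergy hε hcross)
  · exact ((hnear z hz).perturbedEnergy_le hb Metric.infDist_nonneg hε hε₁).trans
      (by nlinarith [hge z])
  · obtain ⟨V', hV', hrate⟩ :=
      (hnear z hz).perturbedEnergy_dissipation ha Metric.infDist_nonneg hε hdamp
    exact ⟨V', hV', hrate.trans (by nlinarith [hle z])⟩

theorem locallyExponentiallyStable_dampedField {M : Set H} {ρ : ℝ} (hM : M.Nonempty) (hρ : 0 < ρ)
    (ha : 0 < a) (hb : 0 < b) (hν : 0 < ν)
    (hgrowth : ∀ q, Metric.infDist q M < ρ →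
      QuadraticGrowthAt U F u₀ a b (Metric.infDist q M) q) :
    LocallyExponentiallyStable (dampedField ν F) (M ×ˢ {0}) := by
  obtain ⟨ε, hε, hε₁, hdamp, hcross⟩ := exists_perturbation_parameter b hν ha
  exact (isQuadraticLyapunov_perturbedEnergy hM ha hb hν hε hε₁ hdamp hcross
    hgrowth).locallyExponentiallyStable hρ (by positivity) (by positivity) (by positivity)

end DampedGradient

section Slice

open Filter Topology

variable {H : Type*} [NormedAddCommGroup H] [InnerProductSpace ℝ H]

open scoped RealInnerProductSpace

theorem exists_coercive_of_pos [FiniteDimensional ℝ H] (A : H →L[ℝ] H) (S : Submodule ℝ H)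
    (hA : ∀ h ∈ S, h ≠ 0 → 0 < ⟪A h, h⟫) :
    ∃ c, 0 < c ∧ ∀ h ∈ S, c * ‖h‖ ^ 2 ≤ ⟪A h, h⟫ := by
  have hcompact : IsCompact (Metric.sphere (0 : H) 1 ∩ S) :=
    (isCompact_sphere 0 1).inter_right S.closed_of_finiteDimensional
  have hcont : ContinuousOn (fun h => ⟪A h, h⟫) (Metric.sphere (0 : H) 1 ∩ S) := by fun_prop
  have hunit : ∀ h ∈ S, h ≠ 0 → ‖h‖⁻¹ • h ∈ Metric.sphere (0 : H) 1 ∩ S := fun h hS hh =>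
    ⟨by simp [norm_smul, hh], S.smul_mem _ hS⟩
  obtain hempty | hnonempty := (Metric.sphere (0 : H) 1 ∩ S : Set H).eq_empty_or_nonempty
  · refine ⟨1, one_pos, fun h hS => ?_⟩
    rcases eq_or_ne h 0 with rfl | hh
    · simp
    · exact absurd (hunit h hS hh) (hempty ▸ Set.notMem_empty _)
  obtain ⟨x, ⟨hx, hxS⟩, hmin⟩ := hcompact.exists_isMinOn hnonempty hcont
  refine ⟨⟪A x, x⟫, hA x hxS (ne_zero_of_mem_unit_sphere ⟨x, hx⟩), fun h hS => ?_⟩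
  rcases eq_or_ne h 0 with rfl | hh
  · simp
  have hle : ⟪A x, x⟫ ≤ ⟪A (‖h‖⁻¹ • h), ‖h‖⁻¹ • h⟫ := hmin (hunit h hS hh)
  rw [map_smul, inner_smul_left, inner_smul_right, conj_trivial, ← mul_assoc, ← mul_inv,
    ← sq, inv_mul_eq_div, le_div_iff₀ (by positivity)] at hle
  exact hle

theorem half_le_sub_of_le_deriv {φ φ' : ℝ → ℝ} {k : ℝ}
    (hφ : ∀ s ∈ Set.Icc (0 : ℝ) 1, HasDerivAt φ (φ' s) s)
    (hk : ∀ s ∈ Set.Ioo (0 : ℝ) 1, k * s ≤ φ' s) : k / 2 ≤ φ 1 - φ 0 := by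
  have hderiv : ∀ s ∈ Set.Icc (0 : ℝ) 1,
      HasDerivAt (fun s => φ s - k / 2 * s ^ 2) (φ' s - k / 2 * (2 * s)) s := fun s hs =>
    ((hφ s hs).sub ((hasDerivAt_pow 2 s).const_mul (k / 2))).congr_deriv (by simp)
  have hmono : MonotoneOn (fun s => φ s - k / 2 * s ^ 2) (Set.Icc 0 1) := by
    refine monotoneOn_of_hasDerivWithinAt_nonneg (convex_Icc 0 1)
      (fun s hs => (hderiv s hs).continuousAt.continuousWithinAt)
      (fun s hs => (hderiv s (interior_subset hs)).hasDerivWithinAt) fun s hs => ?_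
    rw [interior_Icc] at hs
    linarith [hk s hs]
  have hle : φ 0 ≤ φ 1 - k / 2 := by
    simpa using
      hmono (Set.left_mem_Icc.mpr zero_le_one) (Set.right_mem_Icc.mpr zero_le_one) zero_le_one
  linarith

theorem eventually_forall_smul {P : H → Prop} (hP : ∀ᶠ h in 𝓝 0, P h) :
    ∀ᶠ h in 𝓝 0, ∀ s ∈ Set.Icc (0 : ℝ) 1, P (s • h) := by
  obtain ⟨r, hr, hball⟩ := Metric.eventually_nhds_iff_ball.mp hP
  filter_upwards [Metric.ball_mem_nhds 0 hr] with h hh s hs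
  exact hball _ ((convex_ball 0 r).smul_mem_of_zero_mem (Metric.mem_ball_self hr) hh hs)

section LocalEstimates

variable {U : H → ℝ} {F : H → H} {A : H →L[ℝ] H} {e : H} {S : Submodule ℝ H} {c : ℝ}

theorem eventually_norm_sub_apply_le (hFe : F e = 0) (hA : HasFDerivAt F A e) (hc : 0 < c) :
    ∀ᶠ h in 𝓝 0, ‖F (e + h) - A h‖ ≤ c * ‖h‖ := by
  simpa [hFe] using (hasFDerivAt_iff_isLittleO_nhds_zero.mp hA).def hc

theorem eventually_norm_apply_add_le (hFe : F e = 0) (hA : HasFDerivAt F A e) :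
    ∀ᶠ h in 𝓝 0, ‖F (e + h)‖ ≤ (‖A‖ + 1) * ‖h‖ := by
  filter_upwards [eventually_norm_sub_apply_le hFe hA one_pos] with h hh
  calc ‖F (e + h)‖ ≤ ‖A h‖ + ‖F (e + h) - A h‖ := norm_le_insert' _ _
    _ ≤ ‖A‖ * ‖h‖ + 1 * ‖h‖ := add_le_add (A.le_opNorm h) hh
    _ = (‖A‖ + 1) * ‖h‖ := by ring

theorem eventually_le_inner_apply_add (hFe : F e = 0) (hA : HasFDerivAt F A e) (hc : 0 < c)
    (hcoer : ∀ h ∈ S, c * ‖h‖ ^ 2 ≤ ⟪A h, h⟫) :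
    ∀ᶠ h in 𝓝 0, h ∈ S → c / 2 * ‖h‖ ^ 2 ≤ ⟪F (e + h), h⟫ := by
  filter_upwards [eventually_norm_sub_apply_le hFe hA (half_pos hc)] with h hh hS
  have hrem : -(c / 2 * ‖h‖ * ‖h‖) ≤ ⟪F (e + h) - A h, h⟫ :=
    (abs_le.mp ((abs_real_inner_le_norm _ _).trans (by gcongr))).1
  rw [inner_sub_left] at hrem
  linarith [hcoer h hS]

theorem eventually_le_norm_apply_add
    (hinner : ∀ᶠ h in 𝓝 0, h ∈ S → c * ‖h‖ ^ 2 ≤ ⟪F (e + h), h⟫) :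
    ∀ᶠ h in 𝓝 0, h ∈ S → c * ‖h‖ ≤ ‖F (e + h)‖ := by
  filter_upwards [hinner] with h hh hS
  rcases eq_or_ne h 0 with rfl | hne
  · simp
  refine le_of_mul_le_mul_right ?_ (norm_pos_iff.mpr hne)
  calc c * ‖h‖ * ‖h‖ = c * ‖h‖ ^ 2 := by ring
    _ ≤ ⟪F (e + h), h⟫ := hh hS
    _ ≤ ‖F (e + h)‖ * ‖h‖ := real_inner_le_norm _ _

theorem eventually_exists_hasFDerivAt_norm_le (hA : HasFDerivAt F A e)
    (hF : ContDiffAt ℝ 1 F e) :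
    ∀ᶠ h in 𝓝 0, ∃ F' : H →L[ℝ] H, HasFDerivAt F F' (e + h) ∧ ‖F'‖ ≤ ‖A‖ + 1 := by
  have hdiff : ∀ᶠ q in 𝓝 e, DifferentiableAt ℝ F q :=
    (hF.eventually (by simp)).mono fun q hq => hq.differentiableAt one_ne_zero
  have hbound : ∀ᶠ q in 𝓝 e, ‖fderiv ℝ F q‖ < ‖A‖ + 1 :=
    (hF.continuousAt_fderiv one_ne_zero).norm.eventually_lt_const
      (by simp [hA.fderiv])
  have hshift : Tendsto (fun h => e + h) (𝓝 0) (𝓝 e) :=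
    Continuous.tendsto' (by fun_prop) _ _ (add_zero e)
  filter_upwards [hshift.eventually hdiff, hshift.eventually hbound] with h hd hb
  exact ⟨_, hd.hasFDerivAt, hb.le⟩

variable [CompleteSpace H]

theorem hasDerivAt_potential_add_smul {h : H} {s : ℝ}
    (hU : HasGradientAt U (F (e + s • h)) (e + s • h)) :
    HasDerivAt (fun s : ℝ => U (e + s • h)) ⟪F (e + s • h), h⟫ s := by
  have hline : HasDerivAt (fun s : ℝ => e + s • h) ((1 : ℝ) • h) s :=
    ((hasDerivAt_id s).smul_const h).const_add e
  exact (hU.hasFDerivAt.comp_hasDerivAt s hline).congr_deriv (by simp)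

theorem eventually_le_potential_sub
    (hU : ∀ᶠ h in 𝓝 0, HasGradientAt U (F (e + h)) (e + h))
    (hinner : ∀ᶠ h in 𝓝 0, h ∈ S → c * ‖h‖ ^ 2 ≤ ⟪F (e + h), h⟫) :
    ∀ᶠ h in 𝓝 0, h ∈ S → c / 2 * ‖h‖ ^ 2 ≤ U (e + h) - U e := by
  filter_upwards [eventually_forall_smul hU, eventually_forall_smul hinner] with h hgrad hin hS
  have hφ := half_le_sub_of_le_deriv (k := c * ‖h‖ ^ 2)
    (fun s hs => hasDerivAt_potential_add_smul (hgrad s hs)) fun s hs => by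
      have := hin s (Set.Ioo_subset_Icc_self hs) (S.smul_mem s hS)
      rw [norm_smul, inner_smul_right, norm_of_nonneg hs.1.le] at this
      exact le_of_mul_le_mul_left (by linarith) hs.1
  simp only [one_smul, zero_smul, add_zero] at hφ
  linarith

theorem eventually_potential_sub_le
    (hU : ∀ᶠ h in 𝓝 0, HasGradientAt U (F (e + h)) (e + h))
    (hnorm : ∀ᶠ h in 𝓝 0, ‖F (e + h)‖ ≤ c * ‖h‖) :
    ∀ᶠ h in 𝓝 0, U (e + h) - U e ≤ c / 2 * ‖h‖ ^ 2 := by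
  filter_upwards [eventually_forall_smul hU, eventually_forall_smul hnorm] with h hgrad hn
  have hφ := half_le_sub_of_le_deriv (k := -(c * ‖h‖ ^ 2))
    (fun s hs => (hasDerivAt_potential_add_smul (hgrad s hs)).neg) fun s hs => by
      have hFs := hn s (Set.Ioo_subset_Icc_self hs)
      rw [norm_smul, norm_of_nonneg hs.1.le] at hFs
      nlinarith [real_inner_le_norm (F (e + s • h)) h,
        mul_le_mul_of_nonneg_right hFs (norm_nonneg h)]
  simp only [Pi.neg_apply, one_smul, zero_smul, add_zero] at hφ
  linarith

end LocalEstimates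

theorem hasFDerivAt_affineIsometryEquiv (g : H ≃ᵃⁱ[ℝ] H) (x : H) :
    HasFDerivAt g (g.linearIsometryEquiv : H →L[ℝ] H) x := by
  have hg : (g : H → H) = fun y => g.linearIsometryEquiv y + g 0 := funext fun y => by
    simpa using g.map_vadd 0 y
  rw [hg]
  exact g.linearIsometryEquiv.hasFDerivAt.add_const _

/-- The affine isometry `g` is a symmetry of the potential `U` and of its gradient field `F`. -/
structure IsPotentialSymmetry (U : H → ℝ) (F : H → H) (g : H ≃ᵃⁱ[ℝ] H) : Prop where
  potential_map : ∀ x, U (g x) = U x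
  field_map : ∀ x, F (g x) = g.linearIsometryEquiv (F x)

namespace IsPotentialSymmetry

variable {U : H → ℝ} {F : H → H} {g : H ≃ᵃⁱ[ℝ] H} {x : H}

theorem norm_field_map (hg : IsPotentialSymmetry U F g) (x : H) : ‖F (g x)‖ = ‖F x‖ := by
  rw [hg.field_map, LinearIsometryEquiv.norm_map]

theorem exists_hasFDerivAt_map (hg : IsPotentialSymmetry U F g) {b : ℝ}
    (hF : ∃ F' : H →L[ℝ] H, HasFDerivAt F F' x ∧ ‖F'‖ ≤ b) :
    ∃ F' : H →L[ℝ] H, HasFDerivAt F F' (g x) ∧ ‖F'‖ ≤ b := by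
  obtain ⟨F', hF', hb⟩ := hF
  set L : H ≃ₗᵢ[ℝ] H := g.linearIsometryEquiv
  have hconj : L ∘ F ∘ g.symm = F := funext fun y => by
    rw [Function.comp_apply, Function.comp_apply, ← hg.field_map, g.apply_symm_apply]
  rw [← g.symm_apply_apply x] at hF'
  have hcomp := L.hasFDerivAt.comp (g x)
    (hF'.comp (g x) (hasFDerivAt_affineIsometryEquiv g.symm (g x)))
  rw [hconj] at hcomp
  refine ⟨_, hcomp, ContinuousLinearMap.opNorm_le_bound _ ((norm_nonneg F').trans hb) fun v => ?_⟩
  simpa using F'.le_of_opNorm_le hb (g.symm.linearIsometryEquiv v)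

theorem hasGradientAt_map [CompleteSpace H] (hg : IsPotentialSymmetry U F g)
    (hU : HasGradientAt U (F x) x) : HasGradientAt U (F (g x)) (g x) := by
  have hinv : U ∘ g.symm = U := funext fun y => by
    rw [Function.comp_apply, ← hg.potential_map, g.apply_symm_apply]
  rw [← g.symm_apply_apply x] at hU
  have hcomp := hU.hasFDerivAt.comp (g x) (hasFDerivAt_affineIsometryEquiv g.symm (g x))
  rw [hinv] at hcomp
  refine hasGradientAt_iff_hasFDerivAt.mpr (hcomp.congr_fderiv ?_)
  ext v
  have hsymm : g.symm.linearIsometryEquiv = g.linearIsometryEquiv.symm := rfl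
  simpa [hg.field_map, hsymm] using (g.linearIsometryEquiv.inner_map_eq_flip (F x) v).symm

theorem quadraticGrowthAt_map [CompleteSpace H] (hg : IsPotentialSymmetry U F g) {u₀ a b d : ℝ}
    (h : QuadraticGrowthAt U F u₀ a b d x) : QuadraticGrowthAt U F u₀ a b d (g x) where
  hasGradientAt := hg.hasGradientAt_map h.hasGradientAt
  exists_hasFDerivAt := hg.exists_hasFDerivAt_map h.exists_hasFDerivAt
  le_sub := hg.potential_map x ▸ h.le_sub
  sub_le := hg.potential_map x ▸ h.sub_le
  le_norm := hg.norm_field_map x ▸ h.le_norm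
  norm_le := hg.norm_field_map x ▸ h.norm_le

end IsPotentialSymmetry

/-- Every configuration is the image under a symmetry of a point `e + h` of the slice `e + S`,
chosen so that `‖h‖` is its distance to `M`. -/
def HasNearestPointSlice (U : H → ℝ) (F : H → H) (M : Set H) (e : H) (S : Submodule ℝ H) : Prop :=
  ∀ q, ∃ g : H ≃ᵃⁱ[ℝ] H, IsPotentialSymmetry U F g ∧
    ∃ h ∈ S, g (e + h) = q ∧ ‖h‖ = Metric.infDist q M

theorem exists_quadraticGrowthAt_add [FiniteDimensional ℝ H] {U : H → ℝ} {F : H → H} {e : H}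
    {S : Submodule ℝ H} {A : H →L[ℝ] H} (hU : ∀ᶠ q in 𝓝 e, HasGradientAt U (F q) q)
    (hFe : F e = 0) (hF : ContDiffAt ℝ 1 F e) (hA : HasFDerivAt F A e)
    (hpos : ∀ h ∈ S, h ≠ 0 → 0 < ⟪A h, h⟫) :
    ∃ a b, 0 < a ∧ 0 < b ∧ ∀ᶠ h in 𝓝 0, h ∈ S → QuadraticGrowthAt U F (U e) a b ‖h‖ (e + h) := by
  obtain ⟨c, hc, hcoer⟩ := exists_coercive_of_pos A S hpos
  have hU' : ∀ᶠ h in 𝓝 0, HasGradientAt U (F (e + h)) (e + h) :=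
    (Continuous.tendsto' (by fun_prop) _ _ (add_zero e)).eventually hU
  have hinner := eventually_le_inner_apply_add hFe hA hc hcoer
  have hnorm := eventually_norm_apply_add_le hFe hA
  refine ⟨c / 2 / 2, ‖A‖ + 1, by positivity, by positivity, ?_⟩
  filter_upwards [hU', eventually_exists_hasFDerivAt_norm_le hA hF,
    eventually_le_potential_sub hU' hinner, eventually_potential_sub_le hU' hnorm,
    eventually_le_norm_apply_add hinner, hnorm]
    with h hgrad hderiv hle_sub hsub_le hle_norm hnorm_le hS
  exact
    { hasGradientAt := hgrad
      exists_hasFDerivAt := hderiv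
      le_sub := hle_sub hS
      sub_le := hsub_le.trans (by gcongr; exact half_le_self (by positivity))
      le_norm := (by gcongr; exact half_le_self (by positivity) :
        c / 2 / 2 * ‖h‖ ≤ c / 2 * ‖h‖).trans (hle_norm hS)
      norm_le := hnorm_le }

theorem HasNearestPointSlice.locallyExponentiallyStable [FiniteDimensional ℝ H] {U : H → ℝ}
    {F : H → H} {M : Set H} {e : H} {S : Submodule ℝ H} {A : H →L[ℝ] H} {ν : ℝ}
    (hslice : HasNearestPointSlice U F M e S) (hM : M.Nonempty)
    (hU : ∀ᶠ q in 𝓝 e, HasGradientAt U (F q) q)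
    (hFe : F e = 0) (hF : ContDiffAt ℝ 1 F e) (hA : HasFDerivAt F A e)
    (hpos : ∀ h ∈ S, h ≠ 0 → 0 < ⟪A h, h⟫) (hν : 0 < ν) :
    LocallyExponentiallyStable (dampedField ν F) (M ×ˢ {0}) := by
  obtain ⟨a, b, ha, hb, hgrowth⟩ := exists_quadraticGrowthAt_add hU hFe hF hA hpos
  obtain ⟨ρ, hρ, hball⟩ := Metric.eventually_nhds_iff_ball.mp hgrowth
  refine locallyExponentiallyStable_dampedField (U := U) (u₀ := U e) hM hρ ha hb hν fun q hq => ?_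
  obtain ⟨g, hg, h, hS, rfl, hh⟩ := hslice q
  rw [← hh] at hq ⊢
  exact hg.quadraticGrowthAt_map (hball h (mem_ball_zero_iff.mpr hq) hS)

end Slice

section PairInteraction

variable {ι V : Type*} [NormedAddCommGroup V] [InnerProductSpace ℝ V]

open scoped RealInnerProductSpace

/-- Configurations of particles indexed by `ι` in `V`, with the Euclidean norm. -/
abbrev Configuration (ι V : Type*) : Type _ :=
  PiLp 2 fun _ : ι => V

/-- The relative position `q i - q j`, as a continuous linear function of the configuration. -/
noncomputable def relativePosition (V : Type*) [NormedAddCommGroup V] [InnerProductSpace ℝ V]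
    (i j : ι) : Configuration ι V →L[ℝ] V :=
  PiLp.proj (𝕜 := ℝ) 2 (fun _ : ι => V) i - PiLp.proj (𝕜 := ℝ) 2 (fun _ : ι => V) j

theorem relativePosition_apply (i j : ι) (q : Configuration ι V) :
    relativePosition V i j q = q i - q j :=
  rfl

variable [Fintype ι]

/-- The diagonal action on configurations of the rigid motion `x ↦ L x + t`. -/
noncomputable def rigidMotion (ι : Type*) [Fintype ι] (L : V ≃ₗᵢ[ℝ] V) (t : V) :
    Configuration ι V ≃ᵃⁱ[ℝ] Configuration ι V :=
  (LinearIsometryEquiv.piLpCongrRight 2 fun _ => L).toAffineIsometryEquiv.trans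
    (AffineIsometryEquiv.constVAdd ℝ _ (WithLp.toLp 2 fun _ => t))

@[simp]
theorem rigidMotion_apply (L : V ≃ₗᵢ[ℝ] V) (t : V) (q : Configuration ι V) (i : ι) :
    rigidMotion ι L t q i = L (q i) + t :=
  add_comm _ _

@[simp]
theorem linearIsometryEquiv_rigidMotion_apply (L : V ≃ₗᵢ[ℝ] V) (t : V)
    (v : Configuration ι V) (i : ι) :
    (rigidMotion ι L t).linearIsometryEquiv v i = L (v i) :=
  rfl

variable [DecidableEq ι]

/-- The field of a system of pair interactions: particle `i` feels `∑_{j ≠ i} f i j (q i - q j)`. -/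
noncomputable def pairField (f : ι → ι → V → V) (q : Configuration ι V) :
    Configuration ι V :=
  WithLp.toLp 2 fun i => ∑ j ∈ univ.erase i, f i j (q i - q j)

/-- The energy of a system of pair potentials; the factor `1 / 2` compensates for counting every
pair twice. -/
noncomputable def pairEnergy (u : ι → ι → V → ℝ) (q : Configuration ι V) : ℝ :=
  2⁻¹ * ∑ i, ∑ j ∈ univ.erase i, u i j (q i - q j)

/-- Newton's third law for the pair interactions `f`. -/
def ActionReaction (f : ι → ι → V → V) : Prop :=
  ∀ i j x, f j i (-x) = -f i j x

theorem sum_erase_comm {M : Type*} [AddCommMonoid M] (m : ι → ι → M) :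
    ∑ i, ∑ j ∈ univ.erase i, m i j = ∑ i, ∑ j ∈ univ.erase i, m j i :=
  Finset.sum_comm' (by simp [eq_comm])

theorem inner_pairField {f : ι → ι → V → V} (hf : ActionReaction f)
    (q v : Configuration ι V) :
    ⟪pairField f q, v⟫ = 2⁻¹ * ∑ i, ∑ j ∈ univ.erase i, ⟪f i j (q i - q j), v i - v j⟫ := by
  have hdirect : ⟪pairField f q, v⟫ = ∑ i, ∑ j ∈ univ.erase i, ⟪f i j (q i - q j), v i⟫ := by
    simp only [pairField, PiLp.inner_apply, sum_inner]
  have hswap : ∑ i, ∑ j ∈ univ.erase i, ⟪f i j (q i - q j), v j⟫ =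
      -∑ i, ∑ j ∈ univ.erase i, ⟪f i j (q i - q j), v i⟫ := by
    rw [sum_erase_comm, ← Finset.sum_neg_distrib]
    refine Finset.sum_congr rfl fun i _ => ?_
    rw [← Finset.sum_neg_distrib]
    refine Finset.sum_congr rfl fun j _ => ?_
    rw [← inner_neg_left, ← hf, neg_sub]
  simp only [inner_sub_right, Finset.sum_sub_distrib, hswap, hdirect]
  ring

theorem contDiffAt_pairField {f : ι → ι → V → V} {q : Configuration ι V} {n : WithTop ℕ∞}
    (hf : ∀ i j, i ≠ j → ContDiffAt ℝ n (f i j) (q i - q j)) :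
    ContDiffAt ℝ n (pairField f) q :=
  (contDiffAt_piLp 2).mpr fun i => ContDiffAt.sum fun j hj =>
    (hf i j (Finset.ne_of_mem_erase hj).symm).comp q (relativePosition V i j).contDiff.contDiffAt

theorem hasFDerivAt_pairField {f : ι → ι → V → V} {f' : ι → ι → V →L[ℝ] V}
    {q : Configuration ι V}
    (hf : ∀ i j, i ≠ j → HasFDerivAt (f i j) (f' i j) (q i - q j)) :
    ∃ A : Configuration ι V →L[ℝ] Configuration ι V, HasFDerivAt (pairField f) A q ∧
      ∀ h, A h = pairField (fun i j => f' i j) h := by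
  have hcoord : ∀ i, HasFDerivAt
      (fun q : Configuration ι V => ∑ j ∈ univ.erase i, f i j (q i - q j))
      (∑ j ∈ univ.erase i, (f' i j).comp (relativePosition V i j)) q := fun i =>
    HasFDerivAt.fun_sum fun j hj => (hf i j (Finset.ne_of_mem_erase hj).symm).comp q
      (relativePosition V i j).hasFDerivAt
  refine ⟨_, (PiLp.continuousLinearEquiv 2 ℝ fun _ : ι => V).symm.hasFDerivAt.comp q
    (hasFDerivAt_pi.mpr hcoord), fun h => ?_⟩
  ext i
  simp only [ContinuousLinearMap.comp_apply, _root_.sum_apply, pairField, relativePosition_apply,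
    ContinuousLinearEquiv.coe_coe, PiLp.continuousLinearEquiv_symm_apply,
    ContinuousLinearMap.coe_pi']

theorem hasGradientAt_pairEnergy [CompleteSpace V] {u : ι → ι → V → ℝ} {f : ι → ι → V → V}
    {q : Configuration ι V} (hf : ActionReaction f)
    (hu : ∀ i j, i ≠ j → HasGradientAt (u i j) (f i j (q i - q j)) (q i - q j)) :
    HasGradientAt (pairEnergy u) (pairField f q) q := by
  have hpair : ∀ i, ∀ j ∈ univ.erase i, HasFDerivAt (fun q : Configuration ι V => u i j (q i - q j))
      ((InnerProductSpace.toDual ℝ V (f i j (q i - q j))).comp (relativePosition V i j)) q :=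
    fun i j hj => (hu i j (Finset.ne_of_mem_erase hj).symm).hasFDerivAt.comp q
      (relativePosition V i j).hasFDerivAt
  have hsum := (HasFDerivAt.fun_sum fun i (_ : i ∈ univ) =>
    HasFDerivAt.fun_sum (hpair i)).const_mul (2⁻¹ : ℝ)
  refine hasGradientAt_iff_hasFDerivAt.mpr (hsum.congr_fderiv ?_)
  ext v
  simp only [_root_.smul_apply, _root_.sum_apply, ContinuousLinearMap.comp_apply,
    InnerProductSpace.toDual_apply_apply, relativePosition_apply, inner_pairField hf, smul_eq_mul]

theorem isPotentialSymmetry_rigidMotion {u : ι → ι → V → ℝ} {f : ι → ι → V → V}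
    {L : V ≃ₗᵢ[ℝ] V} (hu : ∀ i j x, u i j (L x) = u i j x)
    (hf : ∀ i j x, f i j (L x) = L (f i j x)) (t : V) :
    IsPotentialSymmetry (pairEnergy u) (pairField f) (rigidMotion ι L t) where
  potential_map q := by simp [pairEnergy, ← map_sub, hu]
  field_map q := by
    ext i
    simp only [pairField, rigidMotion_apply, linearIsometryEquiv_rigidMotion_apply,
      add_sub_add_right_eq_sub, ← map_sub, hf, map_sum]

end PairInteraction

section Spring

variable {V : Type*} [NormedAddCommGroup V] [InnerProductSpace ℝ V]

open scoped RealInnerProductSpace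

/-- Hooke's law for a spring of stiffness `k` and rest length `l` extended along `x`. At `x = 0`
the quotient has its junk value, which is harmless because the vector vanishes there. -/
noncomputable def springField (k l : ℝ) (x : V) : V :=
  (k * (1 - l / ‖x‖)) • x

/-- The elastic energy of a spring of stiffness `k` and rest length `l` extended along `x`. -/
noncomputable def springEnergy (k l : ℝ) (x : V) : ℝ :=
  k / 2 * (‖x‖ - l) ^ 2

theorem hasFDerivAt_norm {x : V} (hx : x ≠ 0) :
    HasFDerivAt (fun y : V => ‖y‖) (‖x‖⁻¹ • innerSL ℝ x) x := by
  have hsqrt := (hasStrictFDerivAt_norm_sq x).hasFDerivAt.sqrt (by simpa using hx)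
  simp only [sqrt_sq (norm_nonneg _)] at hsqrt
  refine hsqrt.congr_fderiv ?_
  ext v
  simp only [_root_.smul_apply, innerSL_apply_apply, smul_eq_mul, nsmul_eq_mul,
    Nat.cast_ofNat]
  field_simp

theorem hasGradientAt_springEnergy [CompleteSpace V] (k l : ℝ) {x : V} (hx : x ≠ 0) :
    HasGradientAt (springEnergy k l) (springField k l x) x := by
  refine hasGradientAt_iff_hasFDerivAt.mpr
    ((((hasFDerivAt_norm hx).sub_const l).pow 2).const_mul (k / 2) |>.congr_fderiv ?_)
  have hx' : ‖x‖ ≠ 0 := norm_ne_zero_iff.mpr hx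
  ext v
  simp only [Nat.add_one_sub_one, pow_one, nsmul_eq_mul, Nat.cast_ofNat, _root_.smul_apply,
    coe_innerSL_apply, smul_eq_mul, springField, map_smul, InnerProductSpace.toDual_apply_apply]
  field_simp

theorem contDiffAt_springField (k l : ℝ) {x : V} (hx : x ≠ 0) {n : WithTop ℕ∞} :
    ContDiffAt ℝ n (springField k l) x :=
  (contDiffAt_const.mul (contDiffAt_const.sub
    (contDiffAt_const.div (contDiffAt_norm ℝ hx) (norm_ne_zero_iff.mpr hx)))).smul contDiffAt_id

/-- The derivative of `springField k l` at `x ≠ 0`. -/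
noncomputable def springStiffness (k l : ℝ) (x : V) : V →L[ℝ] V :=
  (k * (1 - l / ‖x‖)) • ContinuousLinearMap.id ℝ V +
    (k * l / ‖x‖ ^ 3) • (innerSL ℝ x).smulRight x

theorem hasFDerivAt_springField (k l : ℝ) {x : V} (hx : x ≠ 0) :
    HasFDerivAt (springField k l) (springStiffness k l x) x := by
  have hx' : ‖x‖ ≠ 0 := norm_ne_zero_iff.mpr hx
  have hinv := (hasDerivAt_inv hx').comp_hasFDerivAt x (hasFDerivAt_norm hx)
  have hcoeff := ((hinv.const_mul l).const_sub 1).const_mul k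
  refine (hcoeff.smul (hasFDerivAt_id x)).congr_fderiv ?_
  ext v
  simp only [Function.comp_apply, smul_smul, neg_mul, neg_smul, smul_neg, neg_neg, id_eq,
    _root_.add_apply, _root_.smul_apply, ContinuousLinearMap.id_apply, smul_eq_mul,
    ContinuousLinearMap.smulRight_apply, coe_innerSL_apply, springStiffness, div_eq_mul_inv,
    add_right_inj]
  ring_nf

theorem inner_springStiffness_self (k l : ℝ) (x v : V) :
    ⟪springStiffness k l x v, v⟫ =
      k * (1 - l / ‖x‖) * ‖v‖ ^ 2 + k * l / ‖x‖ ^ 3 * ⟪x, v⟫ ^ 2 := by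
  simp only [springStiffness, _root_.add_apply, _root_.smul_apply,
    ContinuousLinearMap.id_apply, ContinuousLinearMap.smulRight_apply, innerSL_apply_apply,
    inner_add_left, real_inner_smul_left, real_inner_self_eq_norm_sq]
  ring

theorem springEnergy_map (k l : ℝ) (L : V ≃ₗᵢ[ℝ] V) (x : V) :
    springEnergy k l (L x) = springEnergy k l x := by
  simp only [springEnergy, L.norm_map]

theorem springField_map (k l : ℝ) (L : V ≃ₗᵢ[ℝ] V) (x : V) :
    springField k l (L x) = L (springField k l x) := by
  simp only [springField, L.norm_map, map_smul]

theorem mul_one_sub_div_congr {k k' l l' : ℝ} (hk : k = k') (hkl : k * l = k' * l') (r : ℝ) :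
    k * (1 - l / r) = k' * (1 - l' / r) := by
  rw [mul_one_sub, mul_one_sub, ← mul_div_assoc, ← mul_div_assoc, hkl, hk]

theorem springStiffness_neg_of_eq {k k' l l' : ℝ} (hk : k = k') (hkl : k * l = k' * l') (x : V) :
    springStiffness k l (-x) = springStiffness k' l' x := by
  ext v
  simp [springStiffness, mul_one_sub_div_congr hk hkl, hkl]

variable {ι : Type*} {k l : ι → ι → ℝ}

-- The rest length of a slack pair (`k i j = 0`) is irrelevant, so only `k * l` has to be symmetric.
theorem actionReaction_springField (hk : ∀ i j, k i j = k j i)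
    (hkl : ∀ i j, k i j * l i j = k j i * l j i) :
    ActionReaction fun i j => springField (V := V) (k i j) (l i j) := by
  intro i j x
  simp only [springField, norm_neg, smul_neg, mul_one_sub_div_congr (hk i j) (hkl i j)]

end Spring

section PlanarOrbit

open scoped Pointwise RealInnerProductSpace

theorem inner_sub_eq_zero_of_dist_le {H : Type*} [NormedAddCommGroup H] [InnerProductSpace ℝ H]
    {x y v : H} {γ : ℝ → H} (hγ : HasDerivAt γ v 0) (hy : γ 0 = y)
    (hmin : ∀ s, dist x y ≤ dist x (γ s)) : ⟪x - y, v⟫ = 0 := by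
  subst hy
  have hlocal : IsLocalMin (fun s => ‖x - γ s‖ ^ 2) 0 := Filter.Eventually.of_forall fun s => by
    simpa only [dist_eq_norm] using pow_le_pow_left₀ dist_nonneg (hmin s) 2
  simpa using hlocal.hasDerivAt_eq_zero (hγ.const_sub x).norm_sq

theorem isCompact_range_cos_smul_add_sin_smul {E : Type*} [AddCommGroup E] [Module ℝ E]
    [TopologicalSpace E] [ContinuousAdd E] [ContinuousSMul ℝ E] (u v : E) :
    IsCompact (Set.range fun θ : Real.Angle => θ.cos • u + θ.sin • v) := by
  have : Fact (0 < 2 * π) := ⟨Real.two_pi_pos⟩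
  have : CompactSpace Real.Angle := inferInstanceAs (CompactSpace (AddCircle (2 * π)))
  exact isCompact_range ((Real.Angle.continuous_cos.smul continuous_const).add
    (Real.Angle.continuous_sin.smul continuous_const))

/-- The configuration with all particles at the same point. -/
noncomputable def constantConfiguration (ι V : Type*) [NormedAddCommGroup V]
    [InnerProductSpace ℝ V] : V →L[ℝ] Configuration ι V :=
  (PiLp.continuousLinearEquiv 2 ℝ fun _ : ι => V).symm.toContinuousLinearMap ∘L
    ContinuousLinearMap.pi fun _ => ContinuousLinearMap.id ℝ V

variable {ι V : Type*} [NormedAddCommGroup V] [InnerProductSpace ℝ V]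

@[simp]
theorem constantConfiguration_apply (t : V) (i : ι) : constantConfiguration ι V t i = t :=
  rfl

variable [Fact (Module.finrank ℝ V = 2)] (o : Orientation ℝ V (Fin 2)) (e : Configuration ι V)

/-- The configuration `e` turned by a right angle: the velocity of `e` under the unit-speed rotation
about the origin. -/
noncomputable def quarterTurn : Configuration ι V :=
  WithLp.toLp 2 fun i => o.rightAngleRotation (e i)

@[simp]
theorem quarterTurn_apply (i : ι) : quarterTurn o e i = o.rightAngleRotation (e i) :=
  rfl

/-- The tangent space at `e` of the orbit of `e` under orientation-preserving rigid motions. -/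
noncomputable def infinitesimalMotions : Submodule ℝ (Configuration ι V) :=
  Submodule.span ℝ {quarterTurn o e} ⊔ LinearMap.range (constantConfiguration ι V).toLinearMap

variable {o e} in
theorem mem_infinitesimalMotions {v : Configuration ι V} :
    v ∈ infinitesimalMotions o e ↔
      ∃ (a : ℝ) (b : V), a • quarterTurn o e + constantConfiguration ι V b = v := by
  simp [infinitesimalMotions, Submodule.mem_sup, Submodule.mem_span_singleton]

variable [Fintype ι]

/-- The orbit of `e` under orientation-preserving rigid motions of the plane. -/
def planarOrbit : Set (Configuration ι V) :=
  Set.range fun g : Real.Angle × V => rigidMotion ι (o.rotation g.1) g.2 e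

theorem rigidMotion_rotation (θ : Real.Angle) (t : V) :
    rigidMotion ι (o.rotation θ) t e =
      θ.cos • e + θ.sin • quarterTurn o e + constantConfiguration ι V t := by
  ext i
  simp [o.rotation_apply]

variable {o e}

theorem rigidMotion_mem_planarOrbit (θ : Real.Angle) (t : V) {m : Configuration ι V}
    (hm : m ∈ planarOrbit o e) : rigidMotion ι (o.rotation θ) t m ∈ planarOrbit o e := by
  obtain ⟨⟨θ', t'⟩, rfl⟩ := hm
  refine ⟨(θ + θ', o.rotation θ t' + t), ?_⟩
  ext i
  simp [o.rotation_rotation, add_assoc]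

theorem isClosed_planarOrbit : IsClosed (planarOrbit o e) := by
  have : FiniteDimensional ℝ V := .of_fact_finrank_eq_two
  have horbit : planarOrbit o e =
      (Set.range fun θ : Real.Angle => θ.cos • e + θ.sin • quarterTurn o e) +
        (LinearMap.range (constantConfiguration ι V).toLinearMap : Set (Configuration ι V)) := by
    ext q
    simp [planarOrbit, rigidMotion_rotation, Set.mem_add]
  rw [horbit]
  exact (Submodule.closed_of_finiteDimensional _).add_left_of_isCompact
    (isCompact_range_cos_smul_add_sin_smul _ _)

theorem hasDerivAt_rigidMotion_rotation (a : ℝ) (b : V) :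
    HasDerivAt (fun s : ℝ => rigidMotion ι (o.rotation (a * s : ℝ)) (s • b) e)
      (a • quarterTurn o e + constantConfiguration ι V b) 0 := by
  have hangle : HasDerivAt (fun s => a * s) a 0 := by simpa using (hasDerivAt_id 0).const_mul a
  simp only [rigidMotion_rotation, Real.Angle.cos_coe, Real.Angle.sin_coe, map_smul]
  refine (((hangle.cos.smul_const e).add (hangle.sin.smul_const (quarterTurn o e))).add
    ((hasDerivAt_id 0).smul_const (constantConfiguration ι V b))).congr_deriv ?_
  simp

theorem sub_mem_orthogonal_infinitesimalMotions {x : Configuration ι V}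
    (hmin : ∀ m ∈ planarOrbit o e, dist x e ≤ dist x m) :
    x - e ∈ (infinitesimalMotions o e)ᗮ := by
  refine (Submodule.mem_orthogonal' _ _).mpr fun v hv => ?_
  obtain ⟨a, b, rfl⟩ := mem_infinitesimalMotions.mp hv
  have hzero : rigidMotion ι (o.rotation (a * 0 : ℝ)) ((0 : ℝ) • b) e = e := by
    ext i
    simp
  exact inner_sub_eq_zero_of_dist_le (hasDerivAt_rigidMotion_rotation a b) hzero
    fun s => hmin _ (Set.mem_range_self (((a * s : ℝ) : Real.Angle), s • b))

theorem planarOrbit_nonempty : (planarOrbit o e).Nonempty :=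
  Set.range_nonempty _

theorem hasNearestPointSlice_planarOrbit {U : Configuration ι V → ℝ}
    {F : Configuration ι V → Configuration ι V}
    (hsymm : ∀ θ t, IsPotentialSymmetry U F (rigidMotion ι (o.rotation θ) t)) :
    HasNearestPointSlice U F (planarOrbit o e) e (infinitesimalMotions o e)ᗮ := by
  have : FiniteDimensional ℝ V := .of_fact_finrank_eq_two
  intro q
  obtain ⟨_, ⟨⟨θ, t⟩, rfl⟩, hnearest⟩ :=
    isClosed_planarOrbit.exists_infDist_eq_dist (planarOrbit_nonempty (o := o) (e := e)) q
  set g := rigidMotion ι (o.rotation θ) t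
  have hdist : ∀ m, dist (g.symm q) m = dist q (g m) := fun m => by
    rw [← g.dist_map, g.apply_symm_apply]
  refine ⟨g, hsymm θ t, g.symm q - e, sub_mem_orthogonal_infinitesimalMotions fun m hm => ?_,
    by simp, ?_⟩
  · rw [hdist, hdist, ← hnearest]
    exact Metric.infDist_le_dist_of_mem (rigidMotion_mem_planarOrbit θ t hm)
  · rw [← dist_eq_norm, hdist, hnearest]

end PlanarOrbit

section SpringNetwork

open scoped Topology RealInnerProductSpace

theorem eventually_pairwise_ne {ι X Y : Type*} [Finite ι] [TopologicalSpace X]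
    [TopologicalSpace Y] [T2Space Y] {f : ι → X → Y} {x : X} (hf : ∀ i, ContinuousAt (f i) x)
    (hx : Pairwise fun i j => f i x ≠ f j x) :
    ∀ᶠ y in 𝓝 x, Pairwise fun i j => f i y ≠ f j y :=
  Filter.eventually_all.mpr fun i => Filter.eventually_all.mpr fun j =>
    Filter.eventually_imp_distrib_left.mpr fun hij =>
      ((hf i).ne_iff_eventually_ne (hf j)).mp (hx hij)

variable {ι V : Type*} [Fintype ι] [DecidableEq ι] [NormedAddCommGroup V] [InnerProductSpace ℝ V]

/-- The energy gradient of a network of springs with stiffnesses `k` and rest lengths `l`. -/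
noncomputable def springNetworkField (k l : ι → ι → ℝ) :
    Configuration ι V → Configuration ι V :=
  pairField fun i j => springField (k i j) (l i j)

/-- The second variation at `e`, in the direction `h`, of the energy of a network of springs with
stiffnesses `k` and rest lengths `l`. -/
noncomputable def springNetworkHessian (k l : ι → ι → ℝ) (e h : Configuration ι V) : ℝ :=
  2⁻¹ * ∑ i, ∑ j ∈ univ.erase i,
    (k i j * (1 - l i j / ‖e i - e j‖) * ‖h i - h j‖ ^ 2 +
      k i j * l i j / ‖e i - e j‖ ^ 3 * ⟪e i - e j, h i - h j⟫ ^ 2)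

variable {k l : ι → ι → ℝ} {e : Configuration ι V}

theorem hasFDerivAt_springNetworkField (hk : ∀ i j, k i j = k j i)
    (hkl : ∀ i j, k i j * l i j = k j i * l j i) (he : Pairwise fun i j => e i ≠ e j) :
    ∃ A : Configuration ι V →L[ℝ] Configuration ι V,
      HasFDerivAt (springNetworkField k l) A e ∧ ∀ h, ⟪A h, h⟫ = springNetworkHessian k l e h := by
  obtain ⟨A, hA, hA_apply⟩ := hasFDerivAt_pairField fun i j hij =>
    hasFDerivAt_springField (k i j) (l i j) (sub_ne_zero.mpr (he hij))
  have hreaction : ActionReaction fun i j =>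
      ⇑(springStiffness (k i j) (l i j) (e i - e j)) := fun i j v => by
    beta_reduce
    rw [← neg_sub (e i), springStiffness_neg_of_eq (hk j i) (hkl j i), map_neg]
  refine ⟨A, hA, fun h => ?_⟩
  simp only [hA_apply, inner_pairField hreaction, inner_springStiffness_self, springNetworkHessian]

theorem locallyExponentiallyStable_springNetwork [Fact (Module.finrank ℝ V = 2)]
    (o : Orientation ℝ V (Fin 2)) {ν : ℝ} (hk : ∀ i j, k i j = k j i)
    (hkl : ∀ i j, k i j * l i j = k j i * l j i) (he : Pairwise fun i j => e i ≠ e j)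
    (heq : springNetworkField k l e = 0)
    (hpos : ∀ h ∈ (infinitesimalMotions o e)ᗮ, h ≠ 0 → 0 < springNetworkHessian k l e h)
    (hν : 0 < ν) :
    LocallyExponentiallyStable (dampedField ν (springNetworkField k l))
      (planarOrbit o e ×ˢ {0}) := by
  have : FiniteDimensional ℝ V := .of_fact_finrank_eq_two
  have hslice := hasNearestPointSlice_planarOrbit (o := o) (e := e) fun θ =>
    isPotentialSymmetry_rigidMotion (fun i j => springEnergy_map (k i j) (l i j) (o.rotation θ))
      (fun i j => springField_map (k i j) (l i j) (o.rotation θ))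
  have hcont : ∀ i, ContinuousAt (fun q : Configuration ι V => q i) e := fun i =>
    (PiLp.continuous_apply 2 _ i).continuousAt
  have hgrad := (eventually_pairwise_ne hcont he).mono fun q hq =>
    hasGradientAt_pairEnergy (actionReaction_springField hk hkl) fun i j hij =>
      hasGradientAt_springEnergy (k i j) (l i j) (sub_ne_zero.mpr (hq hij))
  have hsmooth : ContDiffAt ℝ 1 (springNetworkField k l) e := contDiffAt_pairField fun i j hij =>
    contDiffAt_springField (k i j) (l i j) (sub_ne_zero.mpr (he hij))
  obtain ⟨A, hA, hA_inner⟩ := hasFDerivAt_springNetworkField hk hkl he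
  exact hslice.locallyExponentiallyStable planarOrbit_nonempty hgrad heq hsmooth hA
    (fun h hh hne => (hpos h hh hne).trans_eq (hA_inner h).symm) hν

end SpringNetwork

section StressMatrix

open scoped RealInnerProductSpace

/-- The forces exerted by the stress `ω`, as if each pair were joined by a spring of rest length `0`
and (possibly negative) stiffness `ω i j`. -/
noncomputable def stressField {ι V : Type*} [Fintype ι] [DecidableEq ι] [NormedAddCommGroup V]
    [InnerProductSpace ℝ V] (ω : ι → ι → ℝ) : Configuration ι V → Configuration ι V :=
  pairField fun i j x => ω i j • x

theorem inner_stressField_self {ι V : Type*} [Fintype ι] [DecidableEq ι] [NormedAddCommGroup V]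
    [InnerProductSpace ℝ V] {ω : ι → ι → ℝ} (hω : ∀ i j, ω i j = ω j i) (h : Configuration ι V) :
    ⟪stressField ω h, h⟫ = 2⁻¹ * ∑ i, ∑ j ∈ univ.erase i, ω i j * ‖h i - h j‖ ^ 2 := by
  have hreaction : ActionReaction fun i j (x : V) => ω i j • x := fun i j x => by
    simp only [smul_neg, hω j i]
  simp only [stressField, inner_pairField hreaction, real_inner_smul_left,
    real_inner_self_eq_norm_sq]

variable {N : ℕ} {n : Type*} [Fintype n] {ω : Fin N → Fin N → ℝ}

theorem stressMatrix_mulVec_apply (ω : Fin N → Fin N → ℝ) (u : Fin N → ℝ) (i : Fin N) :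
    (stressMatrix ω *ᵥ u) i = ∑ j ∈ univ.erase i, ω i j * (u i - u j) := by
  have hoff : ∀ j ∈ univ.erase i, stressMatrix ω i j * u j = -(ω i j * u j) := fun j hj => by
    simp [stressMatrix, (Finset.ne_of_mem_erase hj).symm]
  rw [mulVec, dotProduct, ← Finset.add_sum_erase univ _ (mem_univ i), Finset.sum_congr rfl hoff,
    stressMatrix, Matrix.of_apply, if_pos rfl, Finset.sum_mul, ← Finset.sum_add_distrib]
  exact Finset.sum_congr rfl fun j _ => by ring

theorem stressField_apply_apply (ω : Fin N → Fin N → ℝ)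
    (q : Configuration (Fin N) (EuclideanSpace ℝ n)) (i : Fin N) (c : n) :
    stressField ω q i c = (stressMatrix ω *ᵥ fun i => q i c) i := by
  simp [stressField, pairField, stressMatrix_mulVec_apply]

theorem inner_stressField_self_eq_sum_dotProduct (ω : Fin N → Fin N → ℝ)
    (h : Configuration (Fin N) (EuclideanSpace ℝ n)) :
    ⟪stressField ω h, h⟫ =
      ∑ c, (fun i => h i c) ⬝ᵥ (stressMatrix ω *ᵥ fun i => h i c) := by
  simp only [PiLp.inner_apply, stressField_apply_apply, dotProduct, RCLike.inner_apply,
    conj_trivial]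
  exact Finset.sum_comm

theorem inner_stressField_self_nonneg (hΩ : (stressMatrix ω).PosSemidef)
    (h : Configuration (Fin N) (EuclideanSpace ℝ n)) : 0 ≤ ⟪stressField ω h, h⟫ := by
  rw [inner_stressField_self_eq_sum_dotProduct]
  exact Finset.sum_nonneg fun c _ => hΩ.dotProduct_mulVec_nonneg _

theorem stressMatrix_mulVec_eq_zero_of_inner_eq_zero (hΩ : (stressMatrix ω).PosSemidef)
    {h : Configuration (Fin N) (EuclideanSpace ℝ n)} (hh : ⟪stressField ω h, h⟫ = 0) (c : n) :
    (stressMatrix ω *ᵥ fun i => h i c) = 0 := by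
  rw [inner_stressField_self_eq_sum_dotProduct] at hh
  exact (hΩ.dotProduct_mulVec_zero_iff _).mp
    ((Finset.sum_eq_zero_iff_of_nonneg fun c _ => hΩ.dotProduct_mulVec_nonneg _).mp hh c
      (mem_univ c))

end StressMatrix

section InfinitesimalRigidity

open scoped RealInnerProductSpace

theorem transpose_eq_neg_of_trace_mul_eq_zero {n : Type*} [Fintype n] {B : Matrix n n ℝ}
    {S : Set (Matrix n n ℝ)}
    (hspan : ∀ A : Matrix n n ℝ, A.IsSymm → A ∈ Submodule.span ℝ S)
    (hB : ∀ M ∈ S, (B * M).trace = 0) : Bᵀ = -B := by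
  have hker : Submodule.span ℝ S ≤
      LinearMap.ker ((Matrix.traceLinearMap n ℝ ℝ).comp (LinearMap.mulLeft ℝ B)) :=
    Submodule.span_le.mpr hB
  have hsymm : (B + Bᵀ).IsSymm := Matrix.isSymm_add_transpose_self B
  have htrace : (B * (B + Bᵀ)).trace = 0 := hker (hspan _ hsymm)
  have htrace_transpose : (Bᵀ * (B + Bᵀ)).trace = 0 := by
    rw [← htrace, ← Matrix.trace_transpose, Matrix.transpose_mul, hsymm,
      Matrix.transpose_transpose, Matrix.trace_mul_comm]
  have hzero : B + Bᵀ = 0 := by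
    rw [← Matrix.trace_conjTranspose_mul_self_eq_zero_iff,
      Matrix.conjTranspose_eq_transpose_of_trivial, hsymm, Matrix.add_mul, Matrix.trace_add,
      htrace, htrace_transpose, add_zero]
  exact eq_neg_of_add_eq_zero_right hzero

/-- The standard orientation of the Euclidean plane. -/
noncomputable abbrev planeOrientation : Orientation ℝ (EuclideanSpace ℝ (Fin 2)) (Fin 2) :=
  (EuclideanSpace.basisFun (Fin 2) ℝ).toBasis.orientation

instance fact_finrank_plane_eq_two : Fact (Module.finrank ℝ (EuclideanSpace ℝ (Fin 2)) = 2) :=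
  ⟨finrank_euclideanSpace_fin⟩

theorem planeOrientation_rightAngleRotation (x : EuclideanSpace ℝ (Fin 2)) :
    planeOrientation.rightAngleRotation x = !₂[-x 1, x 0] := by
  refine ext_inner_right ℝ fun y => ?_
  rw [Orientation.inner_rightAngleRotation_left, Orientation.areaForm_to_volumeForm,
    Orientation.volumeForm_robust _ (EuclideanSpace.basisFun (Fin 2) ℝ) rfl]
  simp only [Module.Basis.det_apply, det_fin_two, Module.Basis.toMatrix_apply, cons_val_zero,
    OrthonormalBasis.coe_toBasis_repr_apply, EuclideanSpace.basisFun_repr, cons_val_one,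
    cons_val_fin_one, PiLp.inner_apply, RCLike.inner_apply, ringHom_apply, Fin.sum_univ_two,
    mul_neg]
  ring

variable {N : ℕ} {ω : Fin N → Fin N → ℝ} {e h : Configuration (Fin N) (EuclideanSpace ℝ (Fin 2))}

theorem exists_eq_toEuclideanLin_add_of_mem_span
    (hspan : ∀ c, (fun i => h i c) ∈ Submodule.span ℝ
      ({fun i => e i 0, fun i => e i 1, (1 : Fin N → ℝ)} : Set (Fin N → ℝ))) :
    ∃ (B : Matrix (Fin 2) (Fin 2) ℝ) (b : EuclideanSpace ℝ (Fin 2)),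
      ∀ i, h i = Matrix.toEuclideanLin B (e i) + b := by
  choose x y z hxyz using fun c => Submodule.mem_span_triple.mp (hspan c)
  refine ⟨Matrix.of fun c => ![x c, y c], WithLp.toLp 2 z, fun i => ?_⟩
  ext c
  fin_cases c <;> simp [Matrix.toLpLin_apply, ← congrFun (hxyz _) i]

theorem mem_infinitesimalMotions_of_transpose_eq_neg {B : Matrix (Fin 2) (Fin 2) ℝ}
    {b : EuclideanSpace ℝ (Fin 2)} (hB : Bᵀ = -B)
    (hh : ∀ i, h i = Matrix.toEuclideanLin B (e i) + b) :
    h ∈ infinitesimalMotions planeOrientation e := by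
  have hskew : ∀ c d, B d c = -B c d := fun c d => congrFun (congrFun hB c) d
  have hdiag : ∀ c, B c c = 0 := fun c => self_eq_neg.mp (hskew c c)
  refine mem_infinitesimalMotions.mpr ⟨B 1 0, b, ?_⟩
  ext i c
  rw [hh]
  fin_cases c <;>
    simp [planeOrientation_rightAngleRotation, Matrix.toLpLin_apply, hdiag, hskew 1 0]

theorem trace_mul_vecMulVec_self {n : Type*} [Fintype n] (B : Matrix n n ℝ) (d : n → ℝ) :
    (B * Matrix.vecMulVec d d).trace = (B *ᵥ d) ⬝ᵥ d := by
  rw [Matrix.mul_vecMulVec, Matrix.trace_vecMulVec]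

/-- The configuration `e` is super stable with stress `ω`, in the sense of Connelly: the stress
matrix is positive semidefinite, its kernel consists of the affine functions of the positions, and
the directions of the stressed edges do not lie on a conic at infinity (equivalently, their squares
span the symmetric matrices). -/
structure IsSuperStable (ω : Fin N → Fin N → ℝ)
    (e : Configuration (Fin N) (EuclideanSpace ℝ (Fin 2))) : Prop where
  posSemidef : (stressMatrix ω).PosSemidef
  mulVec_eq_zero_iff : ∀ u : Fin N → ℝ, stressMatrix ω *ᵥ u = 0 ↔ u ∈ Submodule.span ℝ
    ({fun i => e i 0, fun i => e i 1, (1 : Fin N → ℝ)} : Set (Fin N → ℝ))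
  mem_span_of_isSymm : ∀ A : Matrix (Fin 2) (Fin 2) ℝ, A.IsSymm → A ∈ Submodule.span ℝ
    {M : Matrix (Fin 2) (Fin 2) ℝ | ∃ i j : Fin N, ω i j ≠ 0 ∧
      M = Matrix.vecMulVec (fun c => e i c - e j c) (fun c => e i c - e j c)}

namespace IsSuperStable

theorem stressField_eq_zero (he : IsSuperStable ω e) : stressField ω e = 0 := by
  have hcoord : ∀ c : Fin 2, (stressMatrix ω *ᵥ fun i => e i c) = 0 := fun c =>
    (he.mulVec_eq_zero_iff _).mpr (Submodule.subset_span (by fin_cases c <;> simp))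
  ext i c
  rw [stressField_apply_apply, hcoord]
  rfl

-- The vanishing stress energy makes `h` an affine deformation of `e`; as stressed edges keep their
-- length to first order, its linear part is skew-symmetric.
theorem mem_infinitesimalMotions (he : IsSuperStable ω e)
    (hstress : ⟪stressField ω h, h⟫ = 0)
    (hedge : ∀ i j, ω i j ≠ 0 → ⟪e i - e j, h i - h j⟫ = 0) :
    h ∈ infinitesimalMotions planeOrientation e := by
  obtain ⟨B, b, hB⟩ := exists_eq_toEuclideanLin_add_of_mem_span fun c =>
    (he.mulVec_eq_zero_iff _).mp
      (stressMatrix_mulVec_eq_zero_of_inner_eq_zero he.posSemidef hstress c)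
  refine mem_infinitesimalMotions_of_transpose_eq_neg
    (transpose_eq_neg_of_trace_mul_eq_zero he.mem_span_of_isSymm ?_) hB
  rintro _ ⟨i, j, hij, rfl⟩
  rw [trace_mul_vecMulVec_self, ← hedge i j hij, hB, hB, add_sub_add_right_eq_sub, ← map_sub,
    EuclideanSpace.inner_eq_star_dotProduct]
  rfl

end IsSuperStable

end InfinitesimalRigidity

section StressRealization

open scoped RealInnerProductSpace

/-- The springs with stiffnesses `k` and rest lengths `l` exert the stress `ω` in the configuration
`e`. Positivity of `k i j * l i j` makes the spring `i j` resist a change of its length in addition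
to exerting its stress. -/
structure RealizesStress {ι V : Type*} [NormedAddCommGroup V] [InnerProductSpace ℝ V]
    (k l ω : ι → ι → ℝ) (e : Configuration ι V) : Prop where
  stiffness_comm : ∀ i j, k i j = k j i
  stiffness_mul_length_comm : ∀ i j, k i j * l i j = k j i * l j i
  stress_comm : ∀ i j, ω i j = ω j i
  stiffness_mul : ∀ i j, i ≠ j → k i j * (1 - l i j / ‖e i - e j‖) = ω i j
  stiffness_mul_length_nonneg : ∀ i j, 0 ≤ k i j * l i j
  stiffness_mul_length_pos : ∀ i j, i ≠ j → ω i j ≠ 0 → 0 < k i j * l i j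

namespace RealizesStress

section

variable {ι V : Type*} [NormedAddCommGroup V] [InnerProductSpace ℝ V] {k l ω : ι → ι → ℝ}
  {e h : Configuration ι V}

theorem elongation_nonneg (hkl : RealizesStress k l ω e) (h : Configuration ι V) (i j : ι) :
    0 ≤ k i j * l i j / ‖e i - e j‖ ^ 3 * ⟪e i - e j, h i - h j⟫ ^ 2 :=
  mul_nonneg (div_nonneg (hkl.stiffness_mul_length_nonneg i j) (by positivity)) (sq_nonneg _)

variable [Fintype ι] [DecidableEq ι]

theorem springNetworkField_eq (hkl : RealizesStress k l ω e) :
    springNetworkField k l e = stressField ω e := by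
  ext1 i
  exact Finset.sum_congr rfl fun j hj => by
    simp only [springField, hkl.stiffness_mul i j (Finset.ne_of_mem_erase hj).symm]

theorem springNetworkHessian_eq (hkl : RealizesStress k l ω e) (h : Configuration ι V) :
    springNetworkHessian k l e h = ⟪stressField ω h, h⟫ + 2⁻¹ * ∑ i, ∑ j ∈ univ.erase i,
      k i j * l i j / ‖e i - e j‖ ^ 3 * ⟪e i - e j, h i - h j⟫ ^ 2 := by
  rw [inner_stressField_self hkl.stress_comm, ← mul_add, ← Finset.sum_add_distrib,
    springNetworkHessian]
  congr 1
  refine Finset.sum_congr rfl fun i _ => ?_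
  rw [← Finset.sum_add_distrib]
  exact Finset.sum_congr rfl fun j hj => by
    rw [hkl.stiffness_mul i j (Finset.ne_of_mem_erase hj).symm]

theorem inner_eq_zero_of_sum_eq_zero (hkl : RealizesStress k l ω e)
    (he : Pairwise fun i j => e i ≠ e j)
    (hsum : ∑ i, ∑ j ∈ univ.erase i,
      k i j * l i j / ‖e i - e j‖ ^ 3 * ⟪e i - e j, h i - h j⟫ ^ 2 = 0)
    (i j : ι) (hij : ω i j ≠ 0) : ⟪e i - e j, h i - h j⟫ = 0 := by
  rcases eq_or_ne i j with rfl | hne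
  · simp
  rw [Finset.sum_eq_zero_iff_of_nonneg fun i _ =>
    Finset.sum_nonneg fun j _ => hkl.elongation_nonneg h i j] at hsum
  have hterm := (Finset.sum_eq_zero_iff_of_nonneg fun j _ => hkl.elongation_nonneg h i j).mp
    (hsum i (mem_univ i)) j (Finset.mem_erase.mpr ⟨hne.symm, mem_univ j⟩)
  have hcoeff : 0 < k i j * l i j / ‖e i - e j‖ ^ 3 :=
    div_pos (hkl.stiffness_mul_length_pos i j hne hij)
      (pow_pos (norm_pos_iff.mpr (sub_ne_zero.mpr (he hne))) 3)
  exact pow_eq_zero_iff two_ne_zero |>.mp ((mul_eq_zero.mp hterm).resolve_left hcoeff.ne')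

end

variable {N : ℕ} {k l ω : Fin N → Fin N → ℝ} {ν : ℝ}
  {e : Configuration (Fin N) (EuclideanSpace ℝ (Fin 2))}

theorem springNetworkHessian_pos (hkl : RealizesStress k l ω e) (he : IsSuperStable ω e)
    (hne : Pairwise fun i j => e i ≠ e j) {h : Configuration (Fin N) (EuclideanSpace ℝ (Fin 2))}
    (hh : h ∈ (infinitesimalMotions planeOrientation e)ᗮ) (hh₀ : h ≠ 0) :
    0 < springNetworkHessian k l e h := by
  have hstress := inner_stressField_self_nonneg he.posSemidef h
  have helongation : 0 ≤ ∑ i, ∑ j ∈ univ.erase i,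
      k i j * l i j / ‖e i - e j‖ ^ 3 * ⟪e i - e j, h i - h j⟫ ^ 2 :=
    Finset.sum_nonneg fun i _ => Finset.sum_nonneg fun j _ => hkl.elongation_nonneg h i j
  rw [hkl.springNetworkHessian_eq]
  by_contra hle
  exact hh₀ (Submodule.disjoint_def.mp (Submodule.orthogonal_disjoint _) h
    (he.mem_infinitesimalMotions (by linarith)
      (hkl.inner_eq_zero_of_sum_eq_zero hne (by linarith))) hh)

theorem locallyExponentiallyStable (hkl : RealizesStress k l ω e) (he : IsSuperStable ω e)
    (hne : Pairwise fun i j => e i ≠ e j) (hν : 0 < ν) :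
    LocallyExponentiallyStable (dampedField ν (springNetworkField k l))
      (planarOrbit planeOrientation e ×ˢ {0}) :=
  locallyExponentiallyStable_springNetwork planeOrientation hkl.stiffness_comm
    hkl.stiffness_mul_length_comm hne (hkl.springNetworkField_eq.trans he.stressField_eq_zero)
    (fun _ => hkl.springNetworkHessian_pos he hne) hν

end RealizesStress

theorem pi_div_arctan_mul_pos {s : ℝ} (hs : s ≠ 0) : 0 < π / arctan s * s := by
  rcases hs.lt_or_gt with hs | hs
  · exact mul_pos_of_neg_of_neg (div_neg_of_pos_of_neg pi_pos (arctan_lt_zero.mpr hs)) hs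
  · exact mul_pos (div_pos pi_pos (arctan_pos.mpr hs)) hs

theorem one_sub_arctan_div_pi_pos (s : ℝ) : 0 < 1 - arctan s / π := by
  rw [sub_pos, div_lt_one pi_pos]
  exact (arctan_lt_pi_div_two s).trans (half_lt_self pi_pos)

theorem pi_div_arctan_mul_one_sub {s r : ℝ} (hs : s ≠ 0) (hr : r ≠ 0) :
    π / arctan s * s * (1 - r * (1 - arctan s / π) / r) = s := by
  have harctan : arctan s ≠ 0 := arctan_eq_zero_iff.not.mpr hs
  field_simp
  ring

theorem realizesStress_arctan {ι V : Type*} [NormedAddCommGroup V] [InnerProductSpace ℝ V]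
    {e : Configuration ι V} {ω α l : ι → ι → ℝ} (he : Pairwise fun i j => e i ≠ e j)
    (hω : ∀ i j, ω i j = ω j i) (hω_self : ∀ i, ω i i = 0)
    (hα : ∀ i j, i ≠ j → ω i j ≠ 0 → α i j = π / arctan (ω i j))
    (hl : ∀ i j, i ≠ j → ω i j ≠ 0 → l i j = ‖e i - e j‖ * (1 - arctan (ω i j) / π)) :
    RealizesStress (fun i j => α i j * ω i j) l ω e := by
  have hne : ∀ i j, ω i j ≠ 0 → i ≠ j := by
    rintro i _ hij rfl
    exact hij (hω_self i)
  have hpos : ∀ i j, ω i j ≠ 0 → 0 < α i j * ω i j * l i j := fun i j hij => by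
    rw [hα i j (hne i j hij) hij, hl i j (hne i j hij) hij]
    exact mul_pos (pi_div_arctan_mul_pos hij) (mul_pos
      (norm_pos_iff.mpr (sub_ne_zero.mpr (he (hne i j hij)))) (one_sub_arctan_div_pi_pos _))
  have hα_comm : ∀ i j, α i j * ω i j = α j i * ω j i := fun i j => by
    rcases eq_or_ne (ω i j) 0 with hij | hij
    · rw [← hω i j, hij, mul_zero, mul_zero]
    · have hji : ω j i ≠ 0 := hω i j ▸ hij
      rw [hα i j (hne i j hij) hij, hα j i (hne j i hji) hji, hω i j]
  have hl_comm : ∀ i j, ω i j ≠ 0 → l i j = l j i := fun i j hij => by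
    have hji : ω j i ≠ 0 := hω i j ▸ hij
    rw [hl i j (hne i j hij) hij, hl j i (hne j i hji) hji, hω i j, norm_sub_rev]
  refine ⟨hα_comm, fun i j => ?_, hω, fun i j hij => ?_, fun i j => ?_, fun i j _ => hpos i j⟩
  · rcases eq_or_ne (ω i j) 0 with h0 | h0
    · simp only [← hω i j, h0, mul_zero, zero_mul]
    · simp only [hα_comm i j, hl_comm i j h0]
  · rcases eq_or_ne (ω i j) 0 with h0 | h0
    · simp only [h0, mul_zero, zero_mul]
    · simp only [hα i j hij h0, hl i j hij h0]
      exact pi_div_arctan_mul_one_sub h0 (norm_ne_zero_iff.mpr (sub_ne_zero.mpr (he hij)))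
  · rcases eq_or_ne (ω i j) 0 with h0 | h0
    · simp only [h0, mul_zero, zero_mul, le_refl]
    · exact (hpos i j h0).le

end StressRealization

section RotationMatrix

theorem mem_specialOrthogonalGroup_iff_exists_angle {R : Matrix (Fin 2) (Fin 2) ℝ} :
    R ∈ Matrix.specialOrthogonalGroup (Fin 2) ℝ ↔
      ∃ θ : Real.Angle, R = !![θ.cos, -θ.sin; θ.sin, θ.cos] := by
  constructor
  · intro hR
    obtain ⟨h11, h01, hsq⟩ := Matrix.mem_specialOrthogonalGroup_fin_two_iff.mp hR
    have hnorm : ‖(⟨R 0 0, R 1 0⟩ : ℂ)‖ = 1 := by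
      rw [Complex.norm_eq_sqrt_sq_add_sq, ← neg_sq (R 1 0), ← h01, hsq, sqrt_one]
    have hcos := Complex.norm_mul_cos_arg ⟨R 0 0, R 1 0⟩
    have hsin := Complex.norm_mul_sin_arg ⟨R 0 0, R 1 0⟩
    rw [hnorm, one_mul] at hcos hsin
    refine ⟨Complex.arg ⟨R 0 0, R 1 0⟩, ?_⟩
    rw [Real.Angle.cos_coe, Real.Angle.sin_coe, hcos, hsin, ← h01]
    ext i j
    fin_cases i <;> fin_cases j <;> simp [h11]
  · rintro ⟨θ, rfl⟩
    simp

theorem toEuclideanLin_rotation_apply (θ : Real.Angle) (x : EuclideanSpace ℝ (Fin 2)) :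
    Matrix.toEuclideanLin !![θ.cos, -θ.sin; θ.sin, θ.cos] x = planeOrientation.rotation θ x := by
  ext c
  rw [Orientation.rotation_apply, planeOrientation_rightAngleRotation]
  fin_cases c
  · simp [Matrix.toLpLin_apply, Matrix.vecHead, Matrix.vecTail]
  · simpa [Matrix.toLpLin_apply, Matrix.vecHead, Matrix.vecTail] using
      add_comm (θ.sin * x 0) (θ.cos * x 1)

/-- Phase space as pairs of plain families of positions and momenta, identified with pairs of
configurations; the two sides carry different, equivalent norms. -/
noncomputable def phaseSpaceEquiv (ι V : Type*) [Fintype ι] [NormedAddCommGroup V]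
    [InnerProductSpace ℝ V] :
    ((ι → V) × (ι → V)) ≃L[ℝ] Configuration ι V × Configuration ι V :=
  (PiLp.continuousLinearEquiv 2 ℝ fun _ => V).symm.prodCongr
    (PiLp.continuousLinearEquiv 2 ℝ fun _ => V).symm

theorem phaseSpaceEquiv_preimage_planarOrbit {ι : Type*} [Fintype ι]
    (q : ι → EuclideanSpace ℝ (Fin 2)) :
    phaseSpaceEquiv ι _ ⁻¹' (planarOrbit planeOrientation (WithLp.toLp 2 q) ×ˢ {0}) =
      {z | ∃ (R : Matrix (Fin 2) (Fin 2) ℝ) (t : EuclideanSpace ℝ (Fin 2)),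
        R ∈ Matrix.orthogonalGroup (Fin 2) ℝ ∧ R.det = 1 ∧
        z = (fun i => Matrix.toEuclideanLin R (q i) + t, 0)} := by
  have hmotion : ∀ (θ : Real.Angle) (t : EuclideanSpace ℝ (Fin 2)),
      rigidMotion ι (planeOrientation.rotation θ) t (WithLp.toLp 2 q) =
        WithLp.toLp 2 fun i => Matrix.toEuclideanLin !![θ.cos, -θ.sin; θ.sin, θ.cos] (q i) + t :=
    fun θ t => by
      ext1 i
      simp only [rigidMotion_apply, toEuclideanLin_rotation_apply]
  ext ⟨x, p⟩
  simp only [← and_assoc, ← Matrix.mem_specialOrthogonalGroup_iff,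
    mem_specialOrthogonalGroup_iff_exists_angle, Set.mem_preimage, Set.mem_prod, planarOrbit,
    Set.mem_range, Prod.exists, hmotion, Set.mem_singleton_iff, phaseSpaceEquiv]
  constructor
  · rintro ⟨⟨θ, t, hx⟩, hp⟩
    exact ⟨_, t, ⟨θ, rfl⟩, Prod.ext (WithLp.toLp_injective 2 hx.symm) (WithLp.toLp_injective 2 hp)⟩
  · rintro ⟨_, t, ⟨θ, rfl⟩, hz⟩
    obtain ⟨rfl, rfl⟩ := Prod.mk.inj hz
    exact ⟨⟨θ, t, rfl⟩, rfl⟩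

end RotationMatrix

/-- Theorem 2: under the stated hypotheses, the set `E` of rigid motions of
the desired placement (with zero momenta) is a locally exponentially stable set of
equilibria of the damped gradient system
`q̇_i = p_i, ṗ_i = −ν p_i − ∑_{j≠i} α_ij ω_ij (1 − l_ij/r_ij)(q_i − q_j)`. -/
theorem shape_equilibrium_locally_exponentially_stable
    {N : ℕ} (hN : 4 ≤ N)
    (qe : Fin N → EuclideanSpace ℝ (Fin 2))
    (hdist : ∀ i j, i ≠ j → qe i ≠ qe j)
    (hli : LinearIndependent ℝ
      ![fun i => qe i 0, fun i => qe i 1, (1 : Fin N → ℝ)])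
    (ω : Fin N → Fin N → ℝ)
    (hωs : ∀ i j, ω i j = ω j i) (hωd : ∀ i, ω i i = 0)
    (hΩ : (stressMatrix ω).PosSemidef)
    (hker : ∀ u : Fin N → ℝ, (stressMatrix ω) *ᵥ u = 0 ↔
        u ∈ Submodule.span ℝ
          ({fun i => qe i 0, fun i => qe i 1, (1 : Fin N → ℝ)} : Set (Fin N → ℝ)))
    (α l : Fin N → Fin N → ℝ)
    (hα : ∀ i j, i ≠ j → ω i j ≠ 0 → α i j = π / Real.arctan (ω i j))
    (hl : ∀ i j, i ≠ j → ω i j ≠ 0 →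
      l i j = ‖qe i - qe j‖ * (1 - Real.arctan (ω i j) / π))
    (hspan : ∀ A : Matrix (Fin 2) (Fin 2) ℝ, A.IsSymm →
      A ∈ Submodule.span ℝ
          {M : Matrix (Fin 2) (Fin 2) ℝ | ∃ i j : Fin N, ω i j ≠ 0 ∧
            M = Matrix.vecMulVec (fun k => qe i k - qe j k) (fun k => qe i k - qe j k)})
    (ν : ℝ) (hν : 0 < ν)
    (E : Set ((Fin N → EuclideanSpace ℝ (Fin 2)) × (Fin N → EuclideanSpace ℝ (Fin 2))))
    (hE : E = {z | ∃ (R : Matrix (Fin 2) (Fin 2) ℝ) (t0 : EuclideanSpace ℝ (Fin 2)),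
        R ∈ Matrix.orthogonalGroup (Fin 2) ℝ ∧ R.det = 1 ∧
        z = (fun i => Matrix.toEuclideanLin R (qe i) + t0, 0)}) :
    ∃ δ C lam : ℝ, 0 < δ ∧ 0 < C ∧ 0 < lam ∧
      ∀ q p : ℝ → (Fin N → EuclideanSpace ℝ (Fin 2)),
        (∀ t : ℝ, 0 ≤ t → HasDerivAt q (p t) t) →
        (∀ t : ℝ, 0 ≤ t → HasDerivAt p
          (fun i => (-ν) • p t i - ∑ j ∈ Finset.univ.erase i,
            (α i j * ω i j * (1 - l i j / ‖q t i - q t j‖)) • (q t i - q t j)) t) →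
        Metric.infDist (q 0, p 0) E < δ →
        ∀ t : ℝ, 0 ≤ t →
          Metric.infDist (q t, p t) E ≤
            C * Real.exp (-lam * t) * Metric.infDist (q 0, p 0) E := by
  have hpairwise : Pairwise fun i j => qe i ≠ qe j := fun i j => hdist i j
  have hkl : RealizesStress (fun i j => α i j * ω i j) l ω (WithLp.toLp 2 qe) :=
    realizesStress_arctan hpairwise hωs hωd hα hl
  have hstable := (hkl.locallyExponentiallyStable ⟨hΩ, hker, hspan⟩ hpairwise hν).preimage
    (phaseSpaceEquiv (Fin N) (EuclideanSpace ℝ (Fin 2)))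
  rw [phaseSpaceEquiv_preimage_planarOrbit, ← hE] at hstable
  obtain ⟨δ, C, lam, hδ, hC, hlam, hdecay⟩ := hstable
  exact ⟨δ, C, lam, hδ, hC, hlam, fun q p hq hp =>
    hdecay (fun t => (q t, p t)) fun t ht => (hq t ht).prodMk (hp t ht)⟩
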